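/- arXiv:1709.00159 — 4 statements merged into one kernel-verified Lean document; each statement's English description precedes it below -/
import Mathlib

section
/- Let p = (p₀,p₁,p₂;q₁,q₂) ∈ S(ℤ). Let a = (a₀,a₁,a₂;b₁,b₂) ∈ ℂ⁵ with Re s(a) > 0, a₀ ∉ ℤ≤0, b₁ − a₀ ∉ ℤ and b₂ − a₀ ∉ ℤ. Define g₁(n) := Σ_{k=0}^{(q₁−p₀)n − 1} φ(k;n), where φ(k;n) := Γ(k+p₀n+a₀)·Γ(k−(q₁−p₀)n+a₀−b₁+1)·Γ(k−(q₂−p₀)n+a₀−b₂+1) / (Γ(k+1)·Γ(k+(p₀−p₁)n+a₀−a₁+1)·Γ(k+(p₀−p₂)n+a₀−a₂+1)). Then |D(p)| > 1 and, as n → +∞, t(a) · g₁(n) = B(a;p) · D(p)ⁿ · n^{−s(a)−1/2} · (1 + O(n^{−1/2})); here f(n) = g(n)·(1+O(n^{−1/2})) means there exist K > 0 and N with |f(n)/g(n) − 1| ≤ K·n^{−1/2} for n ≥ N. -/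
/-!
The proof turns `g₁(n)` into a sum with positive weights, finds the weights' total mass in closed
form, and shows that the weights concentrate.

Write `e = q₁ - p₀ ≥ 1`, `c = p₀ - p₁`, `d = p₀ - p₂`, `δ = q₂ - q₁`; the integers `pᵢ`, `qⱼ` and
`qⱼ - pᵢ` are then linear forms in `e, c, d, δ` with natural coefficients.
For `k < e n` the reflection formula turns the two Gamma factors at negative arguments into
reciprocals, and `t(a) φ(k; n) = π² (-1) ^ (δ n) w(k) ρ(k)` (`tval_mul_phiSummand`), where

`w(k) = (k + p₀ n)! / ((e n - k)! ((e + δ) n - k)! k! (k + c n)! (k + d n)!) > 0`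

does not depend on `a`, and `ρ(k)` is a product of five Gamma quotients of the form
`m! / Γ(m + u)` or its inverse.

* *Total mass.* `∑_{k ≤ e n} w(k)` is a quotient of factorials: it is a terminating balanced
  `₃F₂(1)`, summed by the Pfaff–Saalschütz identity (`saalschutz`). Stirling's formula with
  relative error `O(1/n)` gives `c₀ Gⁿ n^(-3/2) (1 + O(1/n))`, where `G = |D(p)|`
  (`totalMass_asymptotics`).
* *Concentration.* The ratio `w(k + 1) / w(k)` is rational in `k`, so a summation by parts gives a
  family of Stein-type identities (`stein_identity`). The cubic terms of the drift cancel, and the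
  drift is, up to a term of size `O(n²)`, the linear function `-s₂ n² (k - x₀ n)` with `s₂ > 0`.
  By induction the `2i`-th moment of `k - x₀ n` is `O(nⁱ)` times the total mass (`moment_bound`).
* *The factor `ρ`.* From `m! / Γ(m + u) = m ^ (1 - u) (1 + O(1/m))` (`gratio_isBigO`), the quantity
  `n ^ (s(a) - 1) ρ(k)` is within `O(|k/n - x₀| + 1/n)` of a nonzero constant when `k/n` is near
  `x₀`, and is polynomially bounded in `n` for all `k` (`rho_bound`). A second moment of the first
  error and a high moment for the tail give a relative error `O(n^(-1/2))` (`sum_rho_bound`).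

What remains is to identify the constants, `B(a; p) = π² · rhoLimit · c₀` (`Bval_eq`) and
`D(p) = (-1) ^ δ G` (`Dval_eq`). Finally `G > 1` (`one_lt_growth`) because each `pᵢ` splits as
`x + y` with `x, y` among the six differences, each difference being used once, and
`(x + y) ^ (x + y) > x ^ x y ^ y`.
-/

open Complex

/-- `D(p) = (−1)^{q₁+q₂} p₀^{p₀}p₁^{p₁}p₂^{p₂} / ∏_{i,j}(q_j−p_i)^{q_j−p_i}`. -/
noncomputable def Dval (p0 p1 p2 q1 q2 : ℤ) : ℝ :=
  (-1 : ℝ) ^ (q1 + q2) *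
    ((p0 : ℝ) ^ (p0 : ℝ) * (p1 : ℝ) ^ (p1 : ℝ) * (p2 : ℝ) ^ (p2 : ℝ)) /
    (((q1 - p0 : ℤ) : ℝ) ^ ((q1 - p0 : ℤ) : ℝ) * ((q1 - p1 : ℤ) : ℝ) ^ ((q1 - p1 : ℤ) : ℝ) *
      ((q1 - p2 : ℤ) : ℝ) ^ ((q1 - p2 : ℤ) : ℝ) * ((q2 - p0 : ℤ) : ℝ) ^ ((q2 - p0 : ℤ) : ℝ) *
      ((q2 - p1 : ℤ) : ℝ) ^ ((q2 - p1 : ℤ) : ℝ) * ((q2 - p2 : ℤ) : ℝ) ^ ((q2 - p2 : ℤ) : ℝ))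

/-- `t(a) = sin π(b₁−a₀) · sin π(b₂−a₀)`. -/
noncomputable def tval (a0 b1 b2 : ℂ) : ℂ :=
  Complex.sin (Real.pi * (b1 - a0)) * Complex.sin (Real.pi * (b2 - a0))

/-- `B(a;p) = π^{1/2} p₀^{a₀−1/2}p₁^{a₁−1/2}p₂^{a₂−1/2} s₂(p)^{s(a)−1} /
(2^{3/2} ∏_{i,j} (q_j−p_i)^{b_j−a_i−1/2})`. -/
noncomputable def Bval (a0 a1 a2 b1 b2 : ℂ) (p0 p1 p2 q1 q2 : ℤ) : ℂ :=
  ((Real.pi ^ ((1 : ℝ) / 2) : ℝ) : ℂ) *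
      ((p0 : ℂ) ^ (a0 - 1 / 2) * (p1 : ℂ) ^ (a1 - 1 / 2) * (p2 : ℂ) ^ (a2 - 1 / 2)) *
      (((p0 * p1 + p1 * p2 + p2 * p0 - q1 * q2 : ℤ) : ℂ) ^ (b1 + b2 - a0 - a1 - a2 - 1)) /
    (((2 : ℂ) ^ ((3 : ℂ) / 2)) *
      (((q1 - p0 : ℤ) : ℂ) ^ (b1 - a0 - 1 / 2) * ((q1 - p1 : ℤ) : ℂ) ^ (b1 - a1 - 1 / 2) *
        ((q1 - p2 : ℤ) : ℂ) ^ (b1 - a2 - 1 / 2) * ((q2 - p0 : ℤ) : ℂ) ^ (b2 - a0 - 1 / 2) *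
        ((q2 - p1 : ℤ) : ℂ) ^ (b2 - a1 - 1 / 2) * ((q2 - p2 : ℤ) : ℂ) ^ (b2 - a2 - 1 / 2)))

/-- The summand `φ(k;n)` of the decomposition of `₃g₂(a+np)`. -/
noncomputable def phiSummand (a0 a1 a2 b1 b2 : ℂ) (p0 p1 p2 q1 q2 : ℤ) (k n : ℕ) : ℂ :=
  (Gamma ((k : ℂ) + (p0 : ℂ) * n + a0) *
      Gamma ((k : ℂ) - ((q1 - p0 : ℤ) : ℂ) * n + a0 - b1 + 1) *
      Gamma ((k : ℂ) - ((q2 - p0 : ℤ) : ℂ) * n + a0 - b2 + 1)) /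
    (Gamma ((k : ℂ) + 1) *
      Gamma ((k : ℂ) + ((p0 - p1 : ℤ) : ℂ) * n + a0 - a1 + 1) *
      Gamma ((k : ℂ) + ((p0 - p2 : ℤ) : ℂ) * n + a0 - a2 + 1))

section

open Filter Asymptotics Topology

/-! ### The weights and their total mass -/

/-- The Chu–Vandermonde identity, written with factorials. -/
theorem vandermonde_factorial (a b t : ℕ) :
    ∑ i ∈ Finset.range (b + 1),
      (1 : ℝ) / ((i.factorial : ℝ) * (a + i).factorial * (b - i).factorial * (b + t - i).factorial)
    = (a + b + (b + t)).factorial /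
      ((b.factorial : ℝ) * (b + t).factorial * (a + b).factorial * (a + (b + t)).factorial) := by
  have h := Nat.add_choose_eq (b + t) (a + b) b
  rw [Finset.Nat.sum_antidiagonal_eq_sum_range_succ_mk] at h
  have h' : (((b + t + (a + b)).choose b : ℕ) : ℝ) = ∑ i ∈ Finset.range (b + 1),
      ((b + t).choose i : ℝ) * ((a + b).choose (b - i) : ℝ) := by
    rw [h]; push_cast; rfl
  rw [Nat.cast_choose ℝ (by omega), show b + t + (a + b) - b = a + (b + t) by omega,
    show b + t + (a + b) = a + b + (b + t) by omega] at h'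
  have h2 : ∀ i ∈ Finset.range (b + 1),
      (1 : ℝ) / ((i.factorial : ℝ) * (a + i).factorial * (b - i).factorial * (b + t - i).factorial)
      = 1 / ((b + t).factorial * (a + b).factorial : ℝ) *
        (((b + t).choose i : ℝ) * ((a + b).choose (b - i) : ℝ)) := by
    intro i hi
    have hi : i ≤ b := by simpa [Nat.lt_succ_iff] using hi
    rw [Nat.cast_choose ℝ (by omega), Nat.cast_choose ℝ (by omega),
      show a + b - (b - i) = a + i by omega]
    have := Nat.factorial_ne_zero
    field_simp
  rw [Finset.sum_congr rfl h2, ← Finset.mul_sum, ← h']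
  field_simp

/-- The weight `(k + P)! / ((A - k)! (B - k)! k! (k + C)! (k + D)!)`. It is meant for
`k ≤ min A B`, where the natural subtractions are exact. -/
noncomputable def wt (A B C D P k : ℕ) : ℝ :=
  ((k + P).factorial : ℝ) /
    ((A - k).factorial * (B - k).factorial * k.factorial * (k + C).factorial * (k + D).factorial)

/-- The Pfaff–Saalschütz summation of a balanced terminating `₃F₂(1)`, in symmetric form. After
reversing the order of summation, one binomial coefficient is expanded by Vandermonde, and the two
resulting sums are again of Vandermonde type. -/
theorem saalschutz (e c d δ : ℕ) :
    ∑ k ∈ Finset.range (e + 1), wt e (e + δ) c d (2 * e + c + d + δ) k =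
      ((2 * e + c + d + δ).factorial * (2 * e + d + δ).factorial * (2 * e + c + δ).factorial : ℝ) /
      (e.factorial * (e + c).factorial * (e + d).factorial *
        (e + δ).factorial * (e + c + δ).factorial * (e + d + δ).factorial) := by
  have key : ∀ j ∈ Finset.range (e + 1), wt e (e + δ) c d (2 * e + c + d + δ) (e - j) =
      ∑ i ∈ Finset.range (e - j + 1),
        ((2 * e + c + d + δ).factorial : ℝ) * ((2 * e + d + δ).factorial /
          (i.factorial * (2 * e + d + δ - i).factorial * (c + i).factorial)) *
        (1 / ((j.factorial : ℝ) * (δ + j).factorial * (e - i - j).factorial *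
          (e - i + (d + i) - j).factorial)) := by
    intro j hj
    have hj : j ≤ e := by simpa [Nat.lt_succ_iff] using hj
    have h := Nat.add_choose_eq (2 * e + d + δ) (e + c - j) (e - j)
    rw [Finset.Nat.sum_antidiagonal_eq_sum_range_succ_mk] at h
    have h' : (((2 * e + d + δ + (e + c - j)).choose (e - j) : ℕ) : ℝ) =
        ∑ i ∈ Finset.range (e - j + 1),
        ((2 * e + d + δ).choose i : ℝ) * ((e + c - j).choose (e - j - i) : ℝ) := by
      rw [h]; push_cast; rfl
    rw [Nat.cast_choose ℝ (by omega),
      show 2 * e + d + δ + (e + c - j) - (e - j) = 2 * e + c + d + δ by omega,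
      show 2 * e + d + δ + (e + c - j) = e - j + (2 * e + c + d + δ) by omega] at h'
    have h3 : wt e (e + δ) c d (2 * e + c + d + δ) (e - j) =
      ((2 * e + c + d + δ).factorial : ℝ) / (j.factorial * (δ + j).factorial *
        (e + c - j).factorial * (e + d - j).factorial) *
       ((e - j + (2 * e + c + d + δ)).factorial /
        ((e - j).factorial * (2 * e + c + d + δ).factorial)) := by
      rw [wt, show e - (e - j) = j by omega, show e + δ - (e - j) = δ + j by omega,
        show e - j + c = e + c - j by omega, show e - j + d = e + d - j by omega]
      field_simp
    rw [h3, h', Finset.mul_sum]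
    refine Finset.sum_congr rfl fun i hi => ?_
    have hi : i ≤ e - j := by simpa [Nat.lt_succ_iff] using hi
    rw [Nat.cast_choose ℝ (by omega), Nat.cast_choose ℝ (by omega),
      show e + c - j - (e - j - i) = c + i by omega, show e - j - i = e - i - j by omega,
      show e - i + (d + i) - j = e + d - j by omega]
    field_simp
  -- with `j = e - k`, the triangular double sum is summed over `j` first
  rw [← Finset.sum_range_reflect]
  simp only [Nat.add_sub_cancel]
  rw [Finset.sum_congr rfl key, Finset.sum_comm' (t' := Finset.range (e + 1))
    (s' := fun i => Finset.range (e - i + 1)) (by intro x y; simp; omega)]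
  have key2 : ∀ i ∈ Finset.range (e + 1), ∑ j ∈ Finset.range (e - i + 1),
        ((2 * e + c + d + δ).factorial : ℝ) * ((2 * e + d + δ).factorial /
          (i.factorial * (2 * e + d + δ - i).factorial * (c + i).factorial)) *
        (1 / ((j.factorial : ℝ) * (δ + j).factorial * (e - i - j).factorial *
          (e - i + (d + i) - j).factorial)) =
      ((2 * e + c + d + δ).factorial : ℝ) * (2 * e + d + δ).factorial /
        ((e + d).factorial * (e + d + δ).factorial) *
      (1 / ((i.factorial : ℝ) * (c + i).factorial * (e - i).factorial *
          (e + δ - i).factorial)) := by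
    intro i hi
    have hi : i ≤ e := by simpa [Nat.lt_succ_iff] using hi
    rw [← Finset.mul_sum, vandermonde_factorial, show e - i + (d + i) = e + d by omega,
      show δ + (e - i) + (e + d) = 2 * e + d + δ - i by omega,
      show δ + (e - i) = e + δ - i by omega, show δ + (e + d) = e + d + δ by omega]
    field_simp
  rw [Finset.sum_congr rfl key2, ← Finset.mul_sum, vandermonde_factorial,
    show c + e + (e + δ) = 2 * e + c + δ by omega, show c + e = e + c by omega,
    show c + (e + δ) = e + c + δ by omega]
  field_simp

/-! ### Concentration of the weights -/

theorem wt_nonneg (A B C D P k : ℕ) : 0 ≤ wt A B C D P k := by unfold wt; positivity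

/-- The ratio of consecutive weights, cleared of denominators. -/
theorem wt_succ (A t C D P k : ℕ) (hk : k < A) :
    wt A (A + t) C D P k * ((k + 1 + P : ℝ) * (A - k) * (A + t - k)) =
      wt A (A + t) C D P (k + 1) * ((k + 1 : ℝ) * (k + 1 + C) * (k + 1 + D)) := by
  obtain ⟨m, rfl⟩ : ∃ m, A = k + 1 + m := ⟨A - (k + 1), by omega⟩
  unfold wt
  rw [show k + 1 + m - k = m + 1 by omega, show k + 1 + m + t - k = m + t + 1 by omega,
    show k + 1 + m - (k + 1) = m by omega, show k + 1 + m + t - (k + 1) = m + t by omega,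
    show k + 1 + P = k + P + 1 by omega, show k + 1 + C = k + C + 1 by omega,
    show k + 1 + D = k + D + 1 by omega]
  simp only [Nat.factorial_succ]
  push_cast
  have := Nat.factorial_ne_zero
  have : (k : ℝ) + C + 1 ≠ 0 := by positivity
  have : (k : ℝ) + D + 1 ≠ 0 := by positivity
  field_simp
  ring

/-- Summation by parts against the weights: the expectation of a difference operator applied to `f`
vanishes. The sum telescopes by `wt_succ`, and both boundary terms are zero. -/
theorem stein_identity (A t C D P : ℕ) (f : ℕ → ℝ) :
    ∑ k ∈ Finset.range (A + 1), wt A (A + t) C D P k *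
      ((k + 1 + P : ℝ) * (A - k) * (A + t - k) * f (k + 1)
        - (k : ℝ) * (k + C) * (k + D) * f k) = 0 := by
  set T : ℕ → ℝ := fun k => wt A (A + t) C D P k * ((k : ℝ) * (k + C) * (k + D) * f k) with hT
  have h : ∀ k ∈ Finset.range A, wt A (A + t) C D P k *
      ((k + 1 + P : ℝ) * (A - k) * (A + t - k) * f (k + 1)
        - (k : ℝ) * (k + C) * (k + D) * f k) = T (k + 1) - T k := by
    intro k hk
    have := wt_succ A t C D P k (by simpa using hk)
    simp only [hT]
    push_cast
    linear_combination f (k + 1) * this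
  rw [Finset.sum_range_succ, Finset.sum_congr rfl h, Finset.sum_range_sub]
  simp [hT]

theorem abs_succ_pow_sub_pow_le (i : ℕ) (y : ℝ) :
    |(y + 1) ^ (2 * i + 1) - y ^ (2 * i + 1)| ≤
      (2 * i + 1) * 2 ^ (2 * i - 1) * (y ^ (2 * i) + 1) := by
  have h := abs_pow_sub_pow_le (y + 1) y (2 * i + 1)
  have h1 : max |y + 1| |y| ≤ |y| + 1 :=
    max_le ((abs_add_le y 1).trans (by simp)) (by linarith)
  have h2 : (max |y + 1| |y|) ^ (2 * i) ≤ 2 ^ (2 * i - 1) * (y ^ (2 * i) + 1) := by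
    refine (pow_le_pow_left₀ (le_max_of_le_right (abs_nonneg _)) h1 _).trans ?_
    have := add_pow_le (abs_nonneg y) zero_le_one (2 * i)
    simpa [pow_mul] using this
  refine h.trans ?_
  simp only [add_sub_cancel_left, abs_one, one_mul, Nat.add_sub_cancel]
  push_cast
  rw [mul_assoc]
  exact mul_le_mul_of_nonneg_left h2 (by positivity)

/-- The weights attached to the level `n`, in the parameters `e = q₁ - p₀`, `c = p₀ - p₁`,
`d = p₀ - p₂`, `δ = q₂ - q₁`, so that `2 e + c + d + δ = p₀`. -/
noncomputable def wn (e c d δ n k : ℕ) : ℝ :=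
  wt (e * n) (e * n + δ * n) (c * n) (d * n) ((2 * e + c + d + δ) * n) k

theorem wt_eq_wn (e c d δ n k : ℕ) :
    wt (e * n) (e * n + δ * n) (c * n) (d * n) ((2 * e + c + d + δ) * n) k = wn e c d δ n k := rfl

/-- The quantity `s₂(p) = p₀ p₁ + p₁ p₂ + p₂ p₀ - q₁ q₂`, in the parameters `e, c, d, δ`. It equals
`p₁ p₂ - (q₁ - p₀) (q₂ - p₀)`. -/
noncomputable def s2 (e c d δ : ℕ) : ℝ :=
  (2 * e + d + δ) * (2 * e + c + δ) - e * (e + δ)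

/-- The point `x₀` such that the weights of level `n` concentrate around `k = x₀ n`. -/
noncomputable def x0 (e c d δ : ℕ) : ℝ :=
  (2 * e + c + d + δ) * e * (e + δ) / s2 e c d δ

theorem s2_pos {e : ℕ} (he : 0 < e) (c d δ : ℕ) : 0 < s2 e c d δ := by
  have : (0 : ℝ) < e := by exact_mod_cast he
  have h : s2 e c d δ = 3 * e ^ 2 + 2 * e * c + e * δ * 3 + 2 * e * d + d * c + d * δ + δ * c
    + δ ^ 2 := by
    unfold s2; ring
  rw [h]; positivity

theorem wn_nonneg (e c d δ n k : ℕ) : 0 ≤ wn e c d δ n k := wt_nonneg _ _ _ _ _ _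

/-- An inequality between real numbers that absorbs the two lower order terms `N Δ` and `Q y p` into
half of the main term `s n² y² p`. Here `p` stands for `y ^ (2 i)`, and `Δ` for a difference of
odd powers. -/
theorem drift_inequality {s c1 c2 c3 n y Q N Δ p : ℝ} (hs : 0 < s) (hc1 : 0 ≤ c1)
    (hn : 1 ≤ n) (hp : 0 ≤ p) (hQ0 : 0 ≤ Q) (hQ1 : Q ≤ c3 * n ^ 2) (hN0 : 0 ≤ N)
    (hN1 : N ≤ c1 * n ^ 3) (hΔ : |Δ| ≤ c2 * (p + 1)) :
    s * n ^ 2 / 2 * (y ^ 2 * p) ≤ (c1 * c2 + c3 ^ 2 / (2 * s)) * n ^ 3 * (p + 1)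
      - (N * Δ - s * n ^ 2 * y ^ 2 * p + Q * y * p) := by
  have e1 : N * Δ ≤ c1 * n ^ 3 * (c2 * (p + 1)) :=
    (mul_le_mul_of_nonneg_left (le_abs_self Δ) hN0).trans
      (mul_le_mul hN1 hΔ (abs_nonneg _) (by positivity))
  have e2 : Q * y ≤ s * n ^ 2 / 2 * y ^ 2 + c3 ^ 2 / (2 * s) * n ^ 2 := by
    have a1 : Q * y ≤ c3 * n ^ 2 * |y| :=
      (mul_le_mul_of_nonneg_left (le_abs_self y) hQ0).trans
        (mul_le_mul_of_nonneg_right hQ1 (abs_nonneg _))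
    have a2 : c3 * |y| ≤ s / 2 * y ^ 2 + c3 ^ 2 / (2 * s) := by
      have : 0 ≤ (s * |y| - c3) ^ 2 / (2 * s) := by positivity
      have h3 : (s * |y| - c3) ^ 2 / (2 * s) =
        s / 2 * |y| ^ 2 + c3 ^ 2 / (2 * s) - c3 * |y| := by
        field_simp; ring
      rw [h3, sq_abs] at this; linarith
    have a3 := mul_le_mul_of_nonneg_left a2 (by positivity : (0 : ℝ) ≤ n ^ 2)
    calc Q * y ≤ n ^ 2 * (c3 * |y|) := by linarith
      _ ≤ _ := a3
      _ = _ := by ring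
  have e3 : Q * y * p ≤ (s * n ^ 2 / 2 * y ^ 2 + c3 ^ 2 / (2 * s) * n ^ 2) * p :=
    mul_le_mul_of_nonneg_right e2 hp
  have e4 : c3 ^ 2 / (2 * s) * (n ^ 2 * p) ≤ c3 ^ 2 / (2 * s) * (n ^ 3 * (p + 1)) := by
    have h2 : (n : ℝ) ^ 2 ≤ n ^ 3 := pow_le_pow_right₀ hn (by norm_num)
    exact mul_le_mul_of_nonneg_left
      (mul_le_mul h2 (by linarith) hp (by positivity)) (by positivity)
  linarith

/-- The integrand of `stein_identity` for `f k = (k - x₀ n) ^ (2 i + 1)`. The cubic drift collapses to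
`-s₂ n² (k - x₀ n)` plus a quadratic term, by the definitions of `s₂` and `x₀`. -/
theorem moment_pointwise {e : ℕ} (he : 0 < e) (c d δ i : ℕ) :
    ∃ K : ℝ, 0 ≤ K ∧ ∀ n : ℕ, 1 ≤ n → ∀ k : ℕ, k ≤ e * n →
      s2 e c d δ * n ^ 2 / 2 * ((k : ℝ) - x0 e c d δ * n) ^ (2 * (i + 1)) ≤
        K * n ^ 3 * (((k : ℝ) - x0 e c d δ * n) ^ (2 * i) + 1)
        - (((k : ℝ) + 1 + ((2 * e + c + d + δ) * n : ℕ)) * ((e * n : ℕ) - k)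
            * ((e * n : ℕ) + (δ * n : ℕ) - k)
            * (((k + 1 : ℕ) : ℝ) - x0 e c d δ * n) ^ (2 * i + 1)
          - (k : ℝ) * (k + (c * n : ℕ)) * (k + (d * n : ℕ))
            * ((k : ℝ) - x0 e c d δ * n) ^ (2 * i + 1)) := by
  have hs := s2_pos he c d δ
  have hx : s2 e c d δ * x0 e c d δ = (2 * e + c + d + δ) * e * (e + δ) := by
    unfold x0; field_simp
  have hsdef : s2 e c d δ = (2 * e + d + δ) * (2 * e + c + δ) - e * (e + δ) := rfl
  generalize s2 e c d δ = s at *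
  generalize x0 e c d δ = x at *
  refine ⟨((e + 1 + (2 * e + c + d + δ)) * (e * (e + δ))) * ((2 * i + 1) * 2 ^ (2 * i - 1))
    + (e * (e + δ) : ℝ) ^ 2 / (2 * s), by positivity, fun n hn k hk => ?_⟩
  have hn1 : (1 : ℝ) ≤ n := by exact_mod_cast hn
  have hk' : (k : ℝ) ≤ e * n := by exact_mod_cast hk
  have hk0 : (0 : ℝ) ≤ k := by positivity
  have hδ : (0 : ℝ) ≤ δ * n := by positivity
  push_cast
  obtain ⟨y, hy⟩ : ∃ y, y = (k : ℝ) - x * n := ⟨_, rfl⟩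
  rw [show (k : ℝ) + 1 - x * n = y + 1 by rw [hy]; ring, ← hy]
  obtain ⟨Q, hQ⟩ : ∃ Q : ℝ, Q = (e * n - k) * (e * n + δ * n - k) := ⟨_, rfl⟩
  have hQ0 : 0 ≤ Q := hQ ▸ mul_nonneg (by linarith) (by linarith)
  have hQ1 : Q ≤ (e * (e + δ)) * n ^ 2 := by
    have : Q ≤ (e * n) * (e * n + δ * n) :=
      hQ ▸ mul_le_mul (by linarith) (by linarith) (by linarith) (by positivity)
    linarith
  have hN1 : (k + 1 + (2 * e + c + d + δ) * n) * Q ≤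
      ((e + 1 + (2 * e + c + d + δ)) * (e * (e + δ))) * n ^ 3 := by
    have : (k + 1 + (2 * e + c + d + δ) * n) * Q ≤
        ((e + 1 + (2 * e + c + d + δ)) * n) * ((e * (e + δ)) * n ^ 2) :=
      mul_le_mul (by linarith) hQ1 hQ0 (by positivity)
    linarith
  have hy2 : 0 ≤ y ^ (2 * i) := by rw [pow_mul]; positivity
  have main := drift_inequality (y := y) hs (by positivity) hn1 hy2 hQ0 hQ1
    (by positivity) hN1 (abs_succ_pow_sub_pow_le i y)
  have lin : Q * (k + 1 + (2 * e + c + d + δ) * n) - k * (k + c * n) * (k + d * n)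
      = - s * n ^ 2 * y + Q := by
    rw [hy, hQ]
    linear_combination (- n ^ 3 : ℝ) * hx + (n ^ 2 * k : ℝ) * hsdef
  have fin : (k + 1 + (2 * e + c + d + δ) * n) * (e * n - k) * (e * n + δ * n - k)
      * (y + 1) ^ (2 * i + 1) - k * (k + c * n) * (k + d * n) * y ^ (2 * i + 1) =
      (k + 1 + (2 * e + c + d + δ) * n) * Q * ((y + 1) ^ (2 * i + 1) - y ^ (2 * i + 1))
        - s * n ^ 2 * y ^ 2 * y ^ (2 * i) + Q * y * y ^ (2 * i) := by
    have h1 : (k + 1 + (2 * e + c + d + δ) * n) * (e * n - k) * (e * n + δ * n - k) =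
      (k + 1 + (2 * e + c + d + δ) * n) * Q := by rw [hQ]; ring
    rw [h1]
    have : y ^ (2 * i + 1) = y * y ^ (2 * i) := by ring
    linear_combination y ^ (2 * i + 1) * lin + (- s * n ^ 2 * y + Q) * this
  rw [fin, show 2 * (i + 1) = 2 + 2 * i by ring, pow_add]
  exact main

/-- The even central moments of the weights: the `2 i`-th one is `O(nⁱ)` relative to the total mass. -/
theorem moment_bound {e : ℕ} (he : 0 < e) (c d δ i : ℕ) :
    ∃ K : ℝ, 0 ≤ K ∧ ∀ n : ℕ, 1 ≤ n →
      ∑ k ∈ Finset.range (e * n + 1), wn e c d δ n k * ((k : ℝ) - x0 e c d δ * n) ^ (2 * i) ≤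
        K * n ^ i * ∑ k ∈ Finset.range (e * n + 1), wn e c d δ n k := by
  induction i with
  | zero => exact ⟨1, zero_le_one, fun n _ => by simp⟩
  | succ i ih =>
    obtain ⟨K, hK, ih⟩ := ih
    obtain ⟨K', hK', hpt⟩ := moment_pointwise he c d δ i
    have hs := s2_pos he c d δ
    refine ⟨2 / s2 e c d δ * (K' * (K + 1)), by positivity, fun n hn => ?_⟩
    have hn1 : (1 : ℝ) ≤ n := by exact_mod_cast hn
    specialize ih n hn
    have hst := stein_identity (e * n) (δ * n) (c * n) (d * n) ((2 * e + c + d + δ) * n)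
      (fun k => ((k : ℝ) - x0 e c d δ * n) ^ (2 * i + 1))
    have hpt' := fun k (hk : k ∈ Finset.range (e * n + 1)) =>
      mul_le_mul_of_nonneg_left (hpt n hn k (by simpa [Nat.lt_succ_iff] using hk))
        (wn_nonneg e c d δ n k)
    have hsum := Finset.sum_le_sum hpt'
    simp only [mul_sub (wn _ _ _ _ _ _), Finset.sum_sub_distrib] at hsum
    simp only [mul_sub (wt _ _ _ _ _ _), Finset.sum_sub_distrib] at hst
    simp only [wt_eq_wn] at hst
    rw [hst, sub_zero] at hsum
    generalize s2 e c d δ = s at *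
    have hni : (1 : ℝ) ≤ n ^ i := one_le_pow₀ hn1
    have l1 : ∑ k ∈ Finset.range (e * n + 1), wn e c d δ n k *
        (s * n ^ 2 / 2 * ((k : ℝ) - x0 e c d δ * n) ^ (2 * (i + 1))) =
        s * n ^ 2 / 2 * ∑ k ∈ Finset.range (e * n + 1), wn e c d δ n k *
        ((k : ℝ) - x0 e c d δ * n) ^ (2 * (i + 1)) := by
      rw [Finset.mul_sum]; exact Finset.sum_congr rfl fun _ _ => by ring
    have l2 : ∑ k ∈ Finset.range (e * n + 1), wn e c d δ n k *
        (K' * n ^ 3 * (((k : ℝ) - x0 e c d δ * n) ^ (2 * i) + 1)) =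
        K' * n ^ 3 * (∑ k ∈ Finset.range (e * n + 1), wn e c d δ n k *
        ((k : ℝ) - x0 e c d δ * n) ^ (2 * i) + ∑ k ∈ Finset.range (e * n + 1), wn e c d δ n k) := by
      rw [← Finset.sum_add_distrib, Finset.mul_sum]
      exact Finset.sum_congr rfl fun _ _ => by ring
    rw [l1, l2] at hsum
    have hW0 : 0 ≤ ∑ k ∈ Finset.range (e * n + 1), wn e c d δ n k :=
      Finset.sum_nonneg fun k _ => wn_nonneg _ _ _ _ _ _
    generalize ∑ k ∈ Finset.range (e * n + 1), wn e c d δ n k = W at *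
    refine le_of_mul_le_mul_left (hsum.trans ?_) (by positivity : 0 < s * (n : ℝ) ^ 2 / 2)
    have a1 : K * n ^ i * W + W ≤ (K + 1) * n ^ i * W := by nlinarith
    calc _ ≤ K' * n ^ 3 * ((K + 1) * n ^ i * W) :=
          mul_le_mul_of_nonneg_left (by linarith) (by positivity)
      _ = _ := by field_simp; ring

/-! ### Asymptotics of Gamma quotients -/

/-- A convergent sequence whose increments are `O(1/m²)` approaches its limit at rate `O(1/m)`. -/
theorem isBigO_sub_of_summable_diff {E : Type*} [NormedAddCommGroup E] {u : ℕ → E} {L : E}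
    (hu : Tendsto u atTop (𝓝 L))
    (h : (fun m => u (m + 1) - u m) =O[atTop] fun m : ℕ => 1 / (m : ℝ) ^ 2) :
    (fun m => u m - L) =O[atTop] fun m : ℕ => 1 / (m : ℝ) := by
  obtain ⟨K, hK, h⟩ := h.exists_pos
  rw [IsBigOWith_def, eventually_atTop] at h
  obtain ⟨M, h⟩ := h
  refine IsBigO.of_bound (2 * K) ?_
  filter_upwards [eventually_ge_atTop (max M 1)] with m hm
  have hm1 : 1 ≤ m := (le_max_right _ _).trans hm
  have hm0 : (1 : ℝ) ≤ m := by exact_mod_cast hm1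
  have step : ∀ j : ℕ, ‖u (m + j) - u m‖ ≤ 2 * K * (1 / m - 1 / (m + j : ℕ)) := by
    intro j
    induction j with
    | zero => simp
    | succ j ih =>
      have h1 := h (m + j) (by have := (le_max_left M 1).trans hm; omega)
      have hr : (0 : ℝ) < (m + j : ℕ) := by positivity
      have hr1 : (1 : ℝ) ≤ (m + j : ℕ) := by exact_mod_cast (by omega : 1 ≤ m + j)
      have h2 : ‖(1 : ℝ) / ((m + j : ℕ) : ℝ) ^ 2‖ ≤
          2 * (1 / (m + j : ℕ) - 1 / (m + (j + 1) : ℕ)) := by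
        rw [Real.norm_of_nonneg (by positivity), ← add_assoc m j 1, Nat.cast_succ (m + j)]
        generalize ((m + j : ℕ) : ℝ) = r at *
        rw [div_sub_div _ _ hr.ne' (by positivity), ← mul_div_assoc,
          div_le_div_iff₀ (by positivity) (by positivity)]
        nlinarith
      calc ‖u (m + (j + 1)) - u m‖ = ‖(u (m + j + 1) - u (m + j)) + (u (m + j) - u m)‖ := by
            rw [← add_assoc]; congr 1; abel
        _ ≤ _ := norm_add_le _ _
        _ ≤ K * (2 * (1 / (m + j : ℕ) - 1 / (m + (j + 1) : ℕ))) +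
            2 * K * (1 / m - 1 / (m + j : ℕ)) :=
          add_le_add (h1.trans (mul_le_mul_of_nonneg_left h2 hK.le)) ih
        _ = _ := by ring
  have lim : Tendsto (fun j => ‖u (m + j) - u m‖) atTop (𝓝 ‖L - u m‖) := by
    have : Tendsto (fun j => u (m + j)) atTop (𝓝 L) := by
      simpa only [add_comm m] using (tendsto_add_atTop_iff_nat m).2 hu
    exact (this.sub_const _).norm
  rw [norm_sub_rev, Real.norm_of_nonneg (by positivity)]
  refine le_of_tendsto lim (Eventually.of_forall fun j => (step j).trans ?_)
  have : (0 : ℝ) ≤ 1 / (m + j : ℕ) := by positivity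
  nlinarith

/-- The Gamma quotient `m! / Γ(m + c)`. It is `0` when `m + c` is a pole of `Γ`, since `Gamma` takes
the value `0` there; thus it agrees with `m!` times the entire function `1 / Γ`. -/
noncomputable def gratio (c : ℂ) (m : ℕ) : ℂ := (m.factorial : ℂ) / Gamma (m + c)

theorem gratio_eq_mul (c : ℂ) (m : ℕ) : gratio c m = (m + c) * gratio (c + 1) m := by
  unfold gratio
  by_cases h : (m : ℂ) + c = 0
  · simp [h]
  · rw [← add_assoc, Gamma_add_one _ h]
    field_simp

theorem one_add_cpow_isBigO (c : ℂ) :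
    (fun z : ℂ => (1 + z) ^ c - 1 - c * z) =O[𝓝 0] fun z => ‖z‖ ^ 2 := by
  have h := (one_add_cpow_hasFPowerSeriesAt_zero (a := c)).isBigO_sub_partialSum_pow 2
  refine h.congr_left fun z => ?_
  simp [FormalMultilinearSeries.partialSum, Finset.sum_range_succ, binomialSeries,
    FormalMultilinearSeries.coeff_ofScalars]
  ring

theorem tendsto_natCast_inv : Tendsto (fun m : ℕ => (1 / (m : ℂ))) atTop (𝓝 0) := by
  simpa using tendsto_inv_atTop_nhds_zero_nat (𝕜 := ℂ)

/-- Euler's limit formula for `Γ(c - 1)`, rearranged. -/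
theorem gratio_tendsto {c : ℂ} (hc : 1 < c.re) :
    Tendsto (fun m : ℕ => gratio c m * (m : ℂ) ^ (c - 1)) atTop (𝓝 1) := by
  have hre : 0 < (c - 1).re := by simpa using hc
  have hne : ∀ k : ℕ, c - 1 ≠ -k := by
    intro k hk
    rw [hk] at hre
    simp at hre
    have : (0 : ℝ) ≤ k := by positivity
    linarith
  have hG : Gamma (c - 1) ≠ 0 := Gamma_ne_zero hne
  have h := (GammaSeq_tendsto_Gamma (c - 1)).div_const (Gamma (c - 1))
  rw [div_self hG] at h
  refine h.congr fun m => ?_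
  have h1 := Gamma_add_nat_div_Gamma_eq (n := m + 1) (c - 1) hne
  have h2 : (ascPochhammer ℂ (m + 1)).eval (c - 1) =
      ∏ j ∈ Finset.range (m + 1), (c - 1 + j) := by
    generalize m + 1 = k
    induction k with
    | zero => simp
    | succ k ih => rw [ascPochhammer_succ_eval, ih, Finset.prod_range_succ]
  rw [GammaSeq, ← h2, ← h1, gratio]
  rw [show c - 1 + ((m + 1 : ℕ) : ℂ) = m + c by push_cast; ring]
  field_simp

/-- The increments of `gratio c m * m ^ (c - 1)` are `O(1/m²)`: the first order terms of the ratio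
`(1 + 1/m) ^ c / (1 + c/m)` cancel. -/
theorem gratio_isBigO_of_one_lt_re {c : ℂ} (hc : 1 < c.re) :
    (fun m : ℕ => gratio c m * (m : ℂ) ^ (c - 1) - 1) =O[atTop] fun m : ℕ => 1 / (m : ℝ) := by
  refine isBigO_sub_of_summable_diff (gratio_tendsto hc) ?_
  set u : ℕ → ℂ := fun m => gratio c m * (m : ℂ) ^ (c - 1)
  have hub : u =O[atTop] fun _ => (1 : ℝ) := (gratio_tendsto hc).isBigO_one ℝ
  have h1 : (fun m : ℕ => (1 + 1 / (m : ℂ)) ^ c - 1 - c * (1 / (m : ℂ)))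
      =O[atTop] fun m : ℕ => 1 / (m : ℝ) ^ 2 := by
    have := (one_add_cpow_isBigO c).comp_tendsto tendsto_natCast_inv
    refine this.congr_right fun m => ?_
    simp
  have h2 : Tendsto (fun m : ℕ => (1 + c * (1 / (m : ℂ)))⁻¹) atTop (𝓝 1) := by
    have := ((tendsto_natCast_inv.const_mul c).const_add 1).inv₀ (by simp)
    simpa using this
  have h3 := (hub.mul (h2.isBigO_one ℝ)).mul h1
  simp only [one_mul] at h3
  refine h3.congr' ?_ EventuallyEq.rfl
  filter_upwards [eventually_ge_atTop 1] with m hm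
  have hm0 : (m : ℂ) ≠ 0 := by exact_mod_cast (by omega : m ≠ 0)
  have hmc : (m : ℂ) + c ≠ 0 := by
    intro h
    have := congrArg re h
    simp at this
    have : (0 : ℝ) ≤ m := by positivity
    linarith
  have hG : Gamma (m + c) ≠ 0 := Gamma_ne_zero_of_re_pos (by
    have : (0 : ℝ) ≤ m := by positivity
    simp; linarith)
  have hp : ((m + 1 : ℕ) : ℂ) ^ (c - 1) = (m : ℂ) ^ (c - 1) * (1 + 1 / (m : ℂ)) ^ (c - 1) := by
    have := mul_cpow_ofReal_nonneg (a := (m : ℝ)) (b := 1 + 1 / m) (by positivity) (by positivity)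
      (c - 1)
    push_cast at this
    rw [← this]
    congr 1
    field_simp
    push_cast
    ring
  have hq : (1 + 1 / (m : ℂ)) ^ c = (1 + 1 / (m : ℂ)) ^ (c - 1) * (1 + 1 / (m : ℂ)) := by
    have h0 : 1 + 1 / (m : ℂ) ≠ 0 := by
      rw [show 1 + 1 / (m : ℂ) = (m + 1) / m by field_simp]
      exact div_ne_zero (Nat.cast_add_one_ne_zero m) hm0
    rw [cpow_sub _ _ h0, cpow_one]
    field_simp
  have hmc' : 1 + c * (1 / (m : ℂ)) ≠ 0 := by
    intro h; apply hmc; field_simp at h; simpa using h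
  simp only [u, gratio]
  rw [hp, hq, show ((m + 1 : ℕ) : ℂ) + c = m + c + 1 by push_cast; ring, Gamma_add_one _ hmc,
    Nat.factorial_succ]
  push_cast
  field_simp
  ring

/-- `m! / Γ(m + c) = m ^ (1 - c) (1 + O(1/m))` for every complex `c`, by descending from large real
part with the functional equation. -/
theorem gratio_isBigO (c : ℂ) :
    (fun m : ℕ => gratio c m * (m : ℂ) ^ (c - 1) - 1) =O[atTop] fun m : ℕ => 1 / (m : ℝ) := by
  -- after `j` steps of the functional equation the real part exceeds `1`
  obtain ⟨j, hj⟩ := exists_nat_gt (1 - c.re)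
  have hj : 1 < (c + j).re := by simp; linarith
  clear * - hj
  induction j generalizing c with
  | zero => exact gratio_isBigO_of_one_lt_re (by simpa using hj)
  | succ j ih =>
    have h := ih (c + 1) (by convert hj using 2; push_cast; ring)
    rw [add_sub_cancel_right] at h
    have h1 : (fun m : ℕ => c * (1 / (m : ℂ))) =O[atTop] fun m : ℕ => 1 / (m : ℝ) := by
      refine IsBigO.const_mul_left (IsBigO.of_norm_le fun m => ?_) c
      simp
    have h2 : (fun m : ℕ => 1 + c * (1 / (m : ℂ))) =O[atTop] fun _ => (1 : ℝ) :=
      ((tendsto_natCast_inv.const_mul c).const_add 1).isBigO_one ℝ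
    have h3 := (h2.mul h).add (h1.congr_right fun m => (one_mul _).symm)
    simp only [one_mul] at h3
    refine h3.congr' ?_ EventuallyEq.rfl
    filter_upwards [eventually_ge_atTop 1] with m hm
    have hm0 : (m : ℂ) ≠ 0 := by exact_mod_cast (by omega : m ≠ 0)
    rw [gratio_eq_mul c m, cpow_sub _ _ hm0, cpow_one]
    field_simp
    ring

theorem exists_poly_bound {f : ℕ → ℂ} (z : ℂ)
    (h : (fun m : ℕ => f m * (m : ℂ) ^ z - 1) =O[atTop] fun m : ℕ => 1 / (m : ℝ)) :
    ∃ K : ℝ, 0 ≤ K ∧ ∃ L : ℕ, ∀ m : ℕ, ‖f m‖ ≤ K * ((m : ℝ) + 1) ^ L := by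
  obtain ⟨L, hL⟩ := exists_nat_ge (-z.re)
  have h1 : Tendsto (fun m : ℕ => 1 / (m : ℝ)) atTop (𝓝 0) := by
    simpa using tendsto_inv_atTop_nhds_zero_nat (𝕜 := ℝ)
  have h2 : (fun m : ℕ => f m * (m : ℂ) ^ z) =O[atTop] fun _ => (1 : ℝ) := by
    have := (h.trans (h1.isBigO_one ℝ)).add (isBigO_const_const (1 : ℂ) (one_ne_zero (α := ℝ)) atTop)
    simpa using this
  have h3 : f =O[atTop] fun m : ℕ => ((m : ℝ) + 1) ^ L := by
    have h4 : (fun m : ℕ => (m : ℂ) ^ (-z)) =O[atTop] fun m : ℕ => ((m : ℝ) + 1) ^ L := by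
      refine IsBigO.of_bound 1 ?_
      filter_upwards [eventually_ge_atTop 1] with m hm
      have hm1 : (1 : ℝ) ≤ m := by exact_mod_cast hm
      rw [norm_natCast_cpow_of_pos (by omega), one_mul, Real.norm_of_nonneg (by positivity)]
      calc (m : ℝ) ^ (-z).re ≤ (m : ℝ) ^ (L : ℝ) :=
            Real.rpow_le_rpow_of_exponent_le hm1 (by simpa using hL)
        _ = (m : ℝ) ^ L := Real.rpow_natCast _ _
        _ ≤ _ := pow_le_pow_left₀ (by positivity) (by linarith) _
    have h5 := h2.mul h4
    simp only [one_mul] at h5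
    refine h5.congr' ?_ EventuallyEq.rfl
    filter_upwards [eventually_ge_atTop 1] with m hm
    have hm0 : (m : ℂ) ≠ 0 := by exact_mod_cast (by omega : m ≠ 0)
    rw [mul_assoc, ← cpow_add _ _ hm0]
    simp
  rw [← Nat.cofinite_eq_atTop] at h3
  obtain ⟨K, hK, hb⟩ := bound_of_isBigO_cofinite h3
  refine ⟨K, hK.le, L, fun m => ?_⟩
  have hpos : (0 : ℝ) < ((m : ℝ) + 1) ^ L := by positivity
  simpa [Real.norm_of_nonneg hpos.le] using hb hpos.ne'

theorem mul_near {α 𝕜 : Type*} [NormedField 𝕜] {l : Filter α} {ε : α → ℝ} (hε : Tendsto ε l (𝓝 0))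
    {f g : α → 𝕜} {a b : 𝕜} (hf : (fun x => f x - a) =O[l] ε) (hg : (fun x => g x - b) =O[l] ε) :
    (fun x => f x * g x - a * b) =O[l] ε := by
  have h1 : f =O[l] fun _ => (1 : ℝ) := by
    have := (hf.trans (hε.isBigO_one ℝ)).add (isBigO_const_const a (one_ne_zero (α := ℝ)) l)
    simpa using this
  have h2 := (h1.mul hg).congr_right fun x => one_mul _
  refine (h2.add (hf.const_mul_left b)).congr_left fun x => by ring

theorem inv_near {α 𝕜 : Type*} [NormedField 𝕜] {l : Filter α} {ε : α → ℝ} (hε : Tendsto ε l (𝓝 0))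
    {f : α → 𝕜} {a : 𝕜} (ha : a ≠ 0) (hf : (fun x => f x - a) =O[l] ε) :
    (fun x => (f x)⁻¹ - a⁻¹) =O[l] ε := by
  have h0 : Tendsto f l (𝓝 a) := by
    have := (hf.trans_tendsto hε).add_const a
    simpa using this
  have h1 := ((h0.inv₀ ha).isBigO_one ℝ).mul (hf.const_mul_left (-a⁻¹))
  refine (h1.congr_right fun x => one_mul _).congr' ?_ EventuallyEq.rfl
  filter_upwards [h0.eventually_ne ha] with x hx
  field_simp
  ring

theorem tendsto_one_div_natCast : Tendsto (fun m : ℕ => 1 / (m : ℝ)) atTop (𝓝 0) := by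
  simpa using tendsto_inv_atTop_nhds_zero_nat (𝕜 := ℝ)

theorem gratio_inv_isBigO (c : ℂ) :
    (fun m : ℕ => (gratio c m)⁻¹ * (m : ℂ) ^ (1 - c) - 1) =O[atTop] fun m : ℕ => 1 / (m : ℝ) := by
  have h := inv_near tendsto_one_div_natCast one_ne_zero (gratio_isBigO c)
  refine h.congr_left fun m => ?_
  rw [mul_inv, ← cpow_neg, neg_sub, inv_one]

/-! ### Stirling's formula for the total mass -/

/-- Stirling's formula with relative error `O(1/m)`. -/
theorem stirlingSeq_isBigO :
    (fun m : ℕ => Stirling.stirlingSeq m / √Real.pi - 1) =O[atTop] fun m : ℕ => 1 / (m : ℝ) := by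
  have hlim := Stirling.tendsto_stirlingSeq_sqrt_pi
  have h : (fun m : ℕ => Stirling.stirlingSeq m - √Real.pi) =O[atTop]
      fun m : ℕ => 1 / (m : ℝ) := by
    refine isBigO_sub_of_summable_diff hlim ?_
    have h1 : (fun m => Real.log (Stirling.stirlingSeq m) - Real.log (Stirling.stirlingSeq (m + 1)))
        =O[atTop] fun m : ℕ => 1 / (m : ℝ) ^ 2 := by
      refine IsBigO.of_bound 1 ?_
      filter_upwards [eventually_ge_atTop 1] with m hm
      obtain ⟨m, rfl⟩ : ∃ j, m = j + 1 := ⟨m - 1, by omega⟩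
      have ha : Real.log (Stirling.stirlingSeq (m + 1 + 1)) ≤
          Real.log (Stirling.stirlingSeq (m + 1)) := Stirling.log_stirlingSeq'_antitone (Nat.le_succ m)
      rw [Real.norm_of_nonneg (by linarith), Real.norm_of_nonneg (by positivity), one_mul]
      refine (Stirling.log_stirlingSeq_sdiff_le (m + 1)).trans ?_
      gcongr
      have : (0 : ℝ) < ((m + 1 : ℕ) : ℝ) := by positivity
      nlinarith
    have h2 := ((hlim.isBigO_one ℝ).mul h1).congr_right fun x => one_mul _
    refine IsBigO.trans (IsBigO.of_bound 1 ?_) h2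
    filter_upwards [eventually_ge_atTop 1] with m hm
    obtain ⟨m, rfl⟩ : ∃ j, m = j + 1 := ⟨m - 1, by omega⟩
    have p1 := Stirling.stirlingSeq'_pos m
    have p2 := Stirling.stirlingSeq'_pos (m + 1)
    have ha : Stirling.stirlingSeq (m + 1 + 1) ≤ Stirling.stirlingSeq (m + 1) :=
      Stirling.stirlingSeq'_antitone (Nat.le_succ m)
    have hl := Real.log_le_log p2 ha
    rw [norm_sub_rev, Real.norm_of_nonneg (by linarith), one_mul, Real.norm_of_nonneg
      (mul_nonneg p1.le (by linarith))]
    generalize Stirling.stirlingSeq (m + 1) = a at *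
    generalize Stirling.stirlingSeq (m + 1 + 1) = b at *
    -- `1 - b / a ≤ log (a / b)` converts the logarithmic increment into an increment
    have h3 : Real.log b - Real.log a + 1 ≤ b / a := by
      have := Real.add_one_le_exp (Real.log b - Real.log a)
      rwa [Real.exp_sub, Real.exp_log p1, Real.exp_log p2] at this
    have h4 := mul_le_mul_of_nonneg_left h3 p1.le
    rw [mul_div_cancel₀ _ p1.ne'] at h4
    linarith
  refine (h.const_mul_left (√Real.pi)⁻¹).congr_left fun m => ?_
  have : √Real.pi ≠ 0 := (Real.sqrt_pos.2 Real.pi_pos).ne'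
  field_simp

/-- The relative error factor in Stirling's approximation of `(p n)!`. -/
noncomputable def stirlingCorr (p n : ℕ) : ℝ := Stirling.stirlingSeq (p * n) / √Real.pi

theorem stirlingCorr_isBigO {p : ℕ} (hp : 0 < p) :
    (fun n : ℕ => stirlingCorr p n - 1) =O[atTop] fun n : ℕ => 1 / (n : ℝ) := by
  have ht : Tendsto (fun n : ℕ => p * n) atTop atTop := tendsto_id.const_mul_atTop' hp
  refine (stirlingSeq_isBigO.comp_tendsto ht).trans (IsBigO.of_bound 1 ?_)
  filter_upwards [eventually_ge_atTop 1] with n hn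
  have hn' : (1 : ℝ) ≤ n := by exact_mod_cast hn
  have hp' : (1 : ℝ) ≤ p := by exact_mod_cast hp
  simp only [Function.comp]
  push_cast
  rw [Real.norm_of_nonneg (by positivity), Real.norm_of_nonneg (by positivity), one_mul]
  gcongr
  nlinarith

theorem factorial_mul_eq {p n : ℕ} (hp : 0 < p) (hn : 0 < n) :
    ((p * n).factorial : ℝ) = stirlingCorr p n * (√(2 * Real.pi) * √n * √p) *
      ((p : ℝ) ^ p) ^ n * (((n : ℝ) / Real.exp 1) ^ n) ^ p := by
  have hpi : √Real.pi ≠ 0 := (Real.sqrt_pos.2 Real.pi_pos).ne'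
  have hp' : (0 : ℝ) < p := by exact_mod_cast hp
  have hn' : (0 : ℝ) < n := by exact_mod_cast hn
  have h1 : √(2 * ((p * n : ℕ) : ℝ)) = √2 * √n * √p := by
    push_cast
    rw [show (2 * (p * n) : ℝ) = 2 * n * p by ring, Real.sqrt_mul (by positivity),
      Real.sqrt_mul (by positivity)]
  have h2 : √(2 * Real.pi) = √2 * √Real.pi := Real.sqrt_mul (by norm_num) _
  have h3 : (((p * n : ℕ) : ℝ) / Real.exp 1) ^ (p * n) =
      ((p : ℝ) ^ p) ^ n * (((n : ℝ) / Real.exp 1) ^ n) ^ p := by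
    rw [← pow_mul, ← pow_mul, mul_comm n p, ← mul_pow]
    push_cast
    rw [mul_div_assoc]
  have h2' : √(2 : ℝ) ≠ 0 := by positivity
  have h4 : √(n : ℝ) ≠ 0 := by positivity
  have h5 : √(p : ℝ) ≠ 0 := by positivity
  rw [stirlingCorr, Stirling.stirlingSeq, h1, h2, h3]
  field_simp

/-- The exponential growth rate `|D(p)|` in the parameters `e, c, d, δ`. -/
noncomputable def growth (e c d δ : ℕ) : ℝ :=
  ((2 * e + c + d + δ : ℕ) : ℝ) ^ (2 * e + c + d + δ) *
    ((2 * e + d + δ : ℕ) : ℝ) ^ (2 * e + d + δ) * ((2 * e + c + δ : ℕ) : ℝ) ^ (2 * e + c + δ) /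
    ((e : ℝ) ^ e * ((e + c : ℕ) : ℝ) ^ (e + c) * ((e + d : ℕ) : ℝ) ^ (e + d) *
      ((e + δ : ℕ) : ℝ) ^ (e + δ) * ((e + c + δ : ℕ) : ℝ) ^ (e + c + δ) *
      ((e + d + δ : ℕ) : ℝ) ^ (e + d + δ))

/-- The constant in the asymptotics of the total mass. -/
noncomputable def c0 (e c d δ : ℕ) : ℝ :=
  √(2 * e + c + d + δ : ℕ) * √(2 * e + d + δ : ℕ) * √(2 * e + c + δ : ℕ) /
    (√(2 * Real.pi) ^ 3 * (√e * √(e + c : ℕ) * √(e + d : ℕ) * √(e + δ : ℕ) * √(e + c + δ : ℕ) *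
      √(e + d + δ : ℕ)))

/-- The closed form of the sum of the weights of level `n`. -/
noncomputable def totalMass (e c d δ n : ℕ) : ℝ :=
  (((2 * e + c + d + δ) * n).factorial * ((2 * e + d + δ) * n).factorial *
      ((2 * e + c + δ) * n).factorial : ℝ) /
    ((e * n).factorial * ((e + c) * n).factorial * ((e + d) * n).factorial *
      ((e + δ) * n).factorial * ((e + c + δ) * n).factorial * ((e + d + δ) * n).factorial)

theorem totalMass_asymptotics {e : ℕ} (he : 0 < e) (c d δ : ℕ) :
    ∃ V : ℕ → ℝ, (fun n => V n - 1) =O[atTop] (fun n : ℕ => 1 / (n : ℝ)) ∧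
      ∀ n : ℕ, 0 < n → totalMass e c d δ n =
        V n * (c0 e c d δ * growth e c d δ ^ n) / √n ^ 3 := by
  have p0 : 0 < 2 * e + c + d + δ := by omega
  have p1 : 0 < 2 * e + d + δ := by omega
  have p2 : 0 < 2 * e + c + δ := by omega
  have d1 : 0 < e + c := by omega
  have d2 : 0 < e + d := by omega
  have d3 : 0 < e + δ := by omega
  have d4 : 0 < e + c + δ := by omega
  have d5 : 0 < e + d + δ := by omega
  refine ⟨fun n => stirlingCorr (2 * e + c + d + δ) n * stirlingCorr (2 * e + d + δ) n *
    stirlingCorr (2 * e + c + δ) n * (stirlingCorr e n * stirlingCorr (e + c) n *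
      stirlingCorr (e + d) n * stirlingCorr (e + δ) n * stirlingCorr (e + c + δ) n *
      stirlingCorr (e + d + δ) n)⁻¹, ?_, fun n hn => ?_⟩
  · have t := tendsto_one_div_natCast
    have hnum := mul_near t (mul_near t (stirlingCorr_isBigO p0) (stirlingCorr_isBigO p1))
      (stirlingCorr_isBigO p2)
    have hden := mul_near t (mul_near t (mul_near t (mul_near t (mul_near t
      (stirlingCorr_isBigO he) (stirlingCorr_isBigO d1)) (stirlingCorr_isBigO d2))
      (stirlingCorr_isBigO d3)) (stirlingCorr_isBigO d4)) (stirlingCorr_isBigO d5)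
    have := mul_near t hnum (inv_near t (by norm_num) hden)
    simpa using this
  · have hn' : (0 : ℝ) < n := by exact_mod_cast hn
    have hE : (((n : ℝ) / Real.exp 1) ^ n) ≠ 0 := by positivity
    -- `p₀ + p₁ + p₂` is the sum of the six differences, so the powers of `n / exp 1` cancel
    have hbal : ∀ E : ℝ, E ^ (2 * e + c + d + δ) * E ^ (2 * e + d + δ) * E ^ (2 * e + c + δ) =
      E ^ e * E ^ (e + c) * E ^ (e + d) * E ^ (e + δ) * E ^ (e + c + δ) * E ^ (e + d + δ) := by
      intro E
      simp only [← pow_add]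
      congr 1; ring
    have hb := hbal (((n : ℝ) / Real.exp 1) ^ n)
    rw [totalMass, factorial_mul_eq p0 hn, factorial_mul_eq p1 hn, factorial_mul_eq p2 hn,
      factorial_mul_eq he hn, factorial_mul_eq d1 hn, factorial_mul_eq d2 hn,
      factorial_mul_eq d3 hn, factorial_mul_eq d4 hn, factorial_mul_eq d5 hn, growth, c0]
    generalize (((n : ℝ) / Real.exp 1) ^ n) = E at *
    have hnum : ∀ s1 s2 s3 r q1 q2 q3 G1 G2 G3 : ℝ,
        s1 * (√(2 * Real.pi) * r * q1) * G1 ^ n * E ^ (2 * e + c + d + δ) *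
        (s2 * (√(2 * Real.pi) * r * q2) * G2 ^ n * E ^ (2 * e + d + δ)) *
        (s3 * (√(2 * Real.pi) * r * q3) * G3 ^ n * E ^ (2 * e + c + δ)) =
        (s1 * s2 * s3) * (√(2 * Real.pi) ^ 3 * r ^ 3) * (q1 * q2 * q3) * (G1 * G2 * G3) ^ n *
        (E ^ (2 * e + c + d + δ) * E ^ (2 * e + d + δ) * E ^ (2 * e + c + δ)) := by
      intros; ring
    have hden : ∀ s1 s2 s3 s4 s5 s6 r q1 q2 q3 q4 q5 q6 G1 G2 G3 G4 G5 G6 E1 E2 E3 E4 E5 E6 : ℝ,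
        s1 * (√(2 * Real.pi) * r * q1) * G1 ^ n * E1 *
        (s2 * (√(2 * Real.pi) * r * q2) * G2 ^ n * E2) *
        (s3 * (√(2 * Real.pi) * r * q3) * G3 ^ n * E3) *
        (s4 * (√(2 * Real.pi) * r * q4) * G4 ^ n * E4) *
        (s5 * (√(2 * Real.pi) * r * q5) * G5 ^ n * E5) *
        (s6 * (√(2 * Real.pi) * r * q6) * G6 ^ n * E6) =
        (s1 * s2 * s3 * s4 * s5 * s6) * (√(2 * Real.pi) ^ 6 * r ^ 6) *
        (q1 * q2 * q3 * q4 * q5 * q6) * (G1 * G2 * G3 * G4 * G5 * G6) ^ n *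
        (E1 * E2 * E3 * E4 * E5 * E6) := by
      intros; ring
    rw [hnum, hden, hb, div_pow]
    have alg : ∀ N M T r Q Q' G G' F : ℝ, T ≠ 0 → r ≠ 0 → F ≠ 0 →
        N * (T ^ 3 * r ^ 3) * Q * G * F / (M * (T ^ 6 * r ^ 6) * Q' * G' * F) =
        N * M⁻¹ * (Q / (T ^ 3 * Q') * (G / G')) / r ^ 3 := by
      intro N M T r Q Q' G G' F hT hr hF
      simp only [div_eq_mul_inv, mul_inv]
      field_simp
    exact alg _ _ _ _ _ _ _ _ _ (by positivity) (by positivity) (by positivity)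

/-! ### The Gamma factor against the weights -/

theorem normalized_moment_bound {e : ℕ} (he : 0 < e) (c d δ i : ℕ) :
    ∃ K : ℝ, 0 ≤ K ∧ ∀ n : ℕ, 1 ≤ n →
      ∑ k ∈ Finset.range (e * n + 1), wn e c d δ n k * ((k : ℝ) / n - x0 e c d δ) ^ (2 * i) ≤
        K / n ^ i * ∑ k ∈ Finset.range (e * n + 1), wn e c d δ n k := by
  obtain ⟨K, hK, h⟩ := moment_bound he c d δ i
  refine ⟨K, hK, fun n hn => ?_⟩
  have hn0 : (0 : ℝ) < n := by exact_mod_cast hn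
  have h1 := mul_le_mul_of_nonneg_left (h n hn) (by positivity : (0 : ℝ) ≤ 1 / n ^ (2 * i))
  rw [Finset.mul_sum] at h1
  refine le_trans (le_of_eq (Finset.sum_congr rfl fun k _ => ?_)) (h1.trans (le_of_eq ?_))
  · rw [show (k : ℝ) / n - x0 e c d δ = (k - x0 e c d δ * n) / n by field_simp, div_pow]
    ring
  · field_simp; ring

/-- The filter on pairs `(n, k)` describing `n → ∞` together with `k / n → x`. -/
noncomputable def ratioFilter (x : ℝ) : Filter (ℕ × ℕ) :=
  comap (fun q : ℕ × ℕ => (q.1, (q.2 : ℝ) / q.1)) (atTop ×ˢ 𝓝 x)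

/-- The error scale `|k / n - x| + 1 / n` at the pair `q = (n, k)`. -/
noncomputable def eps (x : ℝ) (q : ℕ × ℕ) : ℝ := |(q.2 : ℝ) / q.1 - x| + 1 / q.1

theorem tendsto_fst_ratioFilter (x : ℝ) : Tendsto Prod.fst (ratioFilter x) atTop := by
  have h : Tendsto (fun q : ℕ × ℕ => (q.1, (q.2 : ℝ) / q.1)) (ratioFilter x)
    (atTop ×ˢ 𝓝 x) := tendsto_comap
  have h' := (tendsto_fst (f := (atTop : Filter ℕ)) (g := 𝓝 x)).comp h
  exact h'

theorem tendsto_ratio_ratioFilter (x : ℝ) :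
    Tendsto (fun q : ℕ × ℕ => (q.2 : ℝ) / q.1) (ratioFilter x) (𝓝 x) := by
  have h : Tendsto (fun q : ℕ × ℕ => (q.1, (q.2 : ℝ) / q.1)) (ratioFilter x)
    (atTop ×ˢ 𝓝 x) := tendsto_comap
  exact tendsto_snd.comp h

theorem tendsto_eps (x : ℝ) : Tendsto (eps x) (ratioFilter x) (𝓝 0) := by
  have h1 := ((tendsto_ratio_ratioFilter x).sub_const x).abs
  have h2 := tendsto_one_div_natCast.comp (tendsto_fst_ratioFilter x)
  have h3 := h1.add h2
  rw [sub_self, abs_zero, add_zero] at h3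
  exact h3

theorem eps_nonneg (x : ℝ) (q : ℕ × ℕ) : 0 ≤ eps x q := by unfold eps; positivity

/-- If `f m = m ^ (-z) (1 + O(1/m))` and `m / n → y` at least as fast as `k / n → x`, then
`f m * n ^ z = y ^ (-z) + O(eps)`. -/
theorem local_factor {x y : ℝ} (hy : 0 < y) {f : ℕ → ℂ} {z : ℂ}
    (hf : (fun m : ℕ => f m * (m : ℂ) ^ z - 1) =O[atTop] fun m : ℕ => 1 / (m : ℝ))
    {m : ℕ × ℕ → ℕ} (hm : ∀ᶠ q in ratioFilter x, |(m q : ℝ) / q.1 - y| ≤ |(q.2 : ℝ) / q.1 - x|) :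
    (fun q => f (m q) * (q.1 : ℂ) ^ z - (y : ℂ) ^ (-z)) =O[ratioFilter x] eps x := by
  have hε := tendsto_eps x
  have hn := tendsto_fst_ratioFilter x
  have hnR : Tendsto (fun q : ℕ × ℕ => (q.1 : ℝ)) (ratioFilter x) atTop :=
    tendsto_natCast_atTop_atTop.comp hn
  have hm0 : (fun q => (m q : ℝ) / q.1 - y) =O[ratioFilter x] eps x := by
    refine IsBigO.of_bound 1 (hm.mono fun q hq => ?_)
    have h1 := eps_nonneg x q
    rw [one_mul, Real.norm_eq_abs, Real.norm_of_nonneg h1]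
    refine hq.trans ?_
    unfold eps
    have : (0 : ℝ) ≤ 1 / q.1 := by positivity
    linarith
  have hm1 : Tendsto (fun q => (m q : ℝ) / q.1) (ratioFilter x) (𝓝 y) := by
    simpa using (hm0.trans_tendsto hε).add_const y
  have hpos : ∀ᶠ q in ratioFilter x, 0 < q.1 := hn.eventually (eventually_gt_atTop 0)
  have hm2 : Tendsto m (ratioFilter x) atTop := by
    rw [← tendsto_natCast_atTop_iff (R := ℝ)]
    refine (hm1.pos_mul_atTop hy hnR).congr' ?_
    filter_upwards [hpos] with q hq
    have : (q.1 : ℝ) ≠ 0 := by exact_mod_cast hq.ne'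
    field_simp
  have hmpos : ∀ᶠ q in ratioFilter x, 0 < m q := hm2.eventually (eventually_gt_atTop 0)
  have hA : (fun q => f (m q) * (m q : ℂ) ^ z - 1) =O[ratioFilter x] eps x := by
    refine (hf.comp_tendsto hm2).trans ?_
    have h1 : (fun q : ℕ × ℕ => 1 / (q.1 : ℝ)) =O[ratioFilter x] eps x := by
      refine IsBigO.of_norm_le fun q => ?_
      rw [Real.norm_of_nonneg (by positivity)]
      unfold eps
      have := abs_nonneg ((q.2 : ℝ) / q.1 - x)
      linarith
    have h2 := ((hm1.inv₀ hy.ne').isBigO_one ℝ).mul h1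
    refine (h2.congr_right fun _ => one_mul _).congr' ?_ EventuallyEq.rfl
    filter_upwards [hpos, hmpos] with q hq hq'
    have : (q.1 : ℝ) ≠ 0 := by exact_mod_cast hq.ne'
    have : (m q : ℝ) ≠ 0 := by exact_mod_cast hq'.ne'
    simp only [Function.comp]
    field_simp
  have hB : (fun q => (((m q : ℝ) / q.1 : ℝ) : ℂ) ^ (-z) - (y : ℂ) ^ (-z))
      =O[ratioFilter x] eps x := by
    have hd : DifferentiableAt ℝ (fun r : ℝ => (r : ℂ) ^ (-z)) y := by
      have : HasDerivAt (fun w : ℂ => w ^ (-z)) (-z * (y : ℂ) ^ (-z - 1) * 1) (y : ℂ) :=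
        (hasDerivAt_id (y : ℂ)).cpow_const (Or.inl (by simpa using hy))
      exact this.comp_ofReal.differentiableAt
    exact (hd.isBigO_sub.comp_tendsto hm1).trans hm0
  refine (mul_near hε hA hB).congr' ?_ EventuallyEq.rfl
  filter_upwards [hpos, hmpos] with q hq hq'
  have h1 : (0 : ℝ) < q.1 := by exact_mod_cast hq
  have h2 : (0 : ℝ) < m q := by exact_mod_cast hq'
  have h3 : (m q : ℂ) ^ z = (((m q : ℝ) / q.1 : ℝ) : ℂ) ^ z * (q.1 : ℂ) ^ z := by
    have := mul_cpow_ofReal_nonneg (a := (m q : ℝ) / q.1) (b := q.1) (by positivity) h1.le z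
    rw [← ofReal_natCast q.1, ← this, ← ofReal_mul, div_mul_cancel₀ _ h1.ne', ofReal_natCast]
  have h4 : (((m q : ℝ) / q.1 : ℝ) : ℂ) ≠ 0 := by
    rw [Ne, ofReal_eq_zero]; positivity
  rw [h3, cpow_neg]
  have h5 : (((m q : ℝ) / q.1 : ℝ) : ℂ) ^ z ≠ 0 := by
    rw [Ne, cpow_eq_zero_iff]; tauto
  field_simp

/-- The product of Gamma quotients multiplying the weight `wn`. It is used with `u0 = a₀`,
`u1 = b₁ - a₀`, `u2 = b₂ - a₀`, `u3 = a₀ - a₁ + 1`, `u4 = a₀ - a₂ + 1`, so that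
`u1 + u2 + u3 + u4 - u0 - 3 = s(a) - 1`. -/
noncomputable def rho (u0 u1 u2 u3 u4 : ℂ) (e c d δ n k : ℕ) : ℂ :=
  (gratio u0 (k + (2 * e + c + d + δ) * n))⁻¹ * gratio u1 (e * n - k) *
    gratio u2 (e * n + δ * n - k) * gratio u3 (k + c * n) * gratio u4 (k + d * n)

/-- The limit of `n ^ (u1 + u2 + u3 + u4 - u0 - 3) * rho` as `n → ∞` and `k / n → x₀`. The bases are
the limits `x₀ + p₀`, `e - x₀`, `e + δ - x₀`, `x₀ + c`, `x₀ + d` of the ratios `m / n`, each of which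
factors completely over `s₂`. -/
noncomputable def rhoLimit (u0 u1 u2 u3 u4 : ℂ) (e c d δ : ℕ) : ℂ :=
  ((((2 * e + c + d + δ) * (2 * e + d + δ) * (2 * e + c + δ) / s2 e c d δ : ℝ)) : ℂ)
      ^ (-(1 - u0)) *
    ((e * (e + c) * (e + d) / s2 e c d δ : ℝ) : ℂ) ^ (-(u1 - 1)) *
    (((e + δ) * (e + c + δ) * (e + d + δ) / s2 e c d δ : ℝ) : ℂ) ^ (-(u2 - 1)) *
    (((2 * e + d + δ) * (e + c) * (e + c + δ) / s2 e c d δ : ℝ) : ℂ) ^ (-(u3 - 1)) *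
    (((2 * e + c + δ) * (e + d) * (e + d + δ) / s2 e c d δ : ℝ) : ℂ) ^ (-(u4 - 1))

theorem x0_lt {e : ℕ} (he : 0 < e) (c d δ : ℕ) : x0 e c d δ < e := by
  have hs := s2_pos he c d δ
  have he' : (0 : ℝ) < e := by exact_mod_cast he
  have : (e : ℝ) - x0 e c d δ = e * (e + c) * (e + d) / s2 e c d δ := by
    rw [x0]; field_simp; unfold s2; ring
  have : 0 < (e : ℝ) - x0 e c d δ := by rw [this]; positivity
  linarith

/-- The behaviour of `rho` near the concentration point. -/
theorem rho_local {e : ℕ} (he : 0 < e) (c d δ : ℕ) (u0 u1 u2 u3 u4 : ℂ) :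
    (fun q : ℕ × ℕ => rho u0 u1 u2 u3 u4 e c d δ q.1 q.2 *
        (q.1 : ℂ) ^ (u1 + u2 + u3 + u4 - u0 - 3) - rhoLimit u0 u1 u2 u3 u4 e c d δ)
      =O[ratioFilter (x0 e c d δ)] eps (x0 e c d δ) := by
  have hs := s2_pos he c d δ
  have he' : (0 : ℝ) < e := by exact_mod_cast he
  have hpos : ∀ᶠ q in ratioFilter (x0 e c d δ), 0 < q.1 :=
    (tendsto_fst_ratioFilter _).eventually (eventually_gt_atTop 0)
  have hlt : ∀ᶠ q in ratioFilter (x0 e c d δ), q.2 ≤ e * q.1 := by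
    filter_upwards [(tendsto_ratio_ratioFilter _).eventually (gt_mem_nhds (x0_lt he c d δ)), hpos]
      with q hq hq0
    have : (0 : ℝ) < q.1 := by exact_mod_cast hq0
    rw [div_lt_iff₀ this] at hq
    exact_mod_cast hq.le
  have hε := tendsto_eps (x0 e c d δ)
  have l0 := local_factor (x := x0 e c d δ)
    (y := (2 * e + c + d + δ) * (2 * e + d + δ) * (2 * e + c + δ) / s2 e c d δ) (by positivity)
    (gratio_inv_isBigO u0) (m := fun q => q.2 + (2 * e + c + d + δ) * q.1) (by
      filter_upwards [hpos] with q hq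
      have : (0 : ℝ) < q.1 := by exact_mod_cast hq
      refine le_of_eq (congrArg _ ?_)
      push_cast
      rw [x0]; field_simp; unfold s2; ring)
  have l1 := local_factor (x := x0 e c d δ)
    (y := e * (e + c) * (e + d) / s2 e c d δ) (by positivity)
    (gratio_isBigO u1) (m := fun q => e * q.1 - q.2) (by
      filter_upwards [hpos, hlt] with q hq hq'
      have : (0 : ℝ) < q.1 := by exact_mod_cast hq
      rw [← abs_neg]
      refine le_of_eq (congrArg _ ?_)
      rw [Nat.cast_sub hq']
      push_cast
      rw [x0]; field_simp; unfold s2; ring)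
  have l2 := local_factor (x := x0 e c d δ)
    (y := (e + δ) * (e + c + δ) * (e + d + δ) / s2 e c d δ) (by positivity)
    (gratio_isBigO u2) (m := fun q => e * q.1 + δ * q.1 - q.2) (by
      filter_upwards [hpos, hlt] with q hq hq'
      have : (0 : ℝ) < q.1 := by exact_mod_cast hq
      rw [← abs_neg]
      refine le_of_eq (congrArg _ ?_)
      rw [Nat.cast_sub (hq'.trans (Nat.le_add_right _ _))]
      push_cast
      rw [x0]; field_simp; unfold s2; ring)
  have l3 := local_factor (x := x0 e c d δ)
    (y := (2 * e + d + δ) * (e + c) * (e + c + δ) / s2 e c d δ) (by positivity)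
    (gratio_isBigO u3) (m := fun q => q.2 + c * q.1) (by
      filter_upwards [hpos] with q hq
      have : (0 : ℝ) < q.1 := by exact_mod_cast hq
      refine le_of_eq (congrArg _ ?_)
      push_cast
      rw [x0]; field_simp; unfold s2; ring)
  have l4 := local_factor (x := x0 e c d δ)
    (y := (2 * e + c + δ) * (e + d) * (e + d + δ) / s2 e c d δ) (by positivity)
    (gratio_isBigO u4) (m := fun q => q.2 + d * q.1) (by
      filter_upwards [hpos] with q hq
      have : (0 : ℝ) < q.1 := by exact_mod_cast hq
      refine le_of_eq (congrArg _ ?_)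
      push_cast
      rw [x0]; field_simp; unfold s2; ring)
  refine (mul_near hε (mul_near hε (mul_near hε (mul_near hε l0 l1) l2) l3) l4).congr' ?_
    EventuallyEq.rfl
  filter_upwards [hpos] with q hq
  have hq0 : (q.1 : ℂ) ≠ 0 := by exact_mod_cast hq.ne'
  rw [rhoLimit, rho, show u1 + u2 + u3 + u4 - u0 - 3 =
    (1 - u0) + (u1 - 1) + (u2 - 1) + (u3 - 1) + (u4 - 1) by ring]
  simp only [cpow_add _ _ hq0]
  ring

/-- A polynomial bound for `rho` on the whole range of summation. -/
theorem rho_global (e c d δ : ℕ) (u0 u1 u2 u3 u4 z : ℂ) :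
    ∃ K : ℝ, 0 ≤ K ∧ ∃ L : ℕ, ∀ n k : ℕ, 1 ≤ n → k ≤ e * n →
      ‖rho u0 u1 u2 u3 u4 e c d δ n k * (n : ℂ) ^ z‖ ≤ K * (n : ℝ) ^ L := by
  obtain ⟨K0, hK0, L0, h0⟩ := exists_poly_bound _ (gratio_inv_isBigO u0)
  obtain ⟨K1, hK1, L1, h1⟩ := exists_poly_bound _ (gratio_isBigO u1)
  obtain ⟨K2, hK2, L2, h2⟩ := exists_poly_bound _ (gratio_isBigO u2)
  obtain ⟨K3, hK3, L3, h3⟩ := exists_poly_bound _ (gratio_isBigO u3)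
  obtain ⟨K4, hK4, L4, h4⟩ := exists_poly_bound _ (gratio_isBigO u4)
  obtain ⟨L5, hL5⟩ := exists_nat_ge z.re
  set Q : ℝ := 3 * e + c + d + δ + 1 with hQ
  refine ⟨K0 * Q ^ L0 * (K1 * Q ^ L1) * (K2 * Q ^ L2) * (K3 * Q ^ L3) * (K4 * Q ^ L4),
    by positivity, L0 + L1 + L2 + L3 + L4 + L5, fun n k hn hk => ?_⟩
  have hn1 : (1 : ℝ) ≤ n := by exact_mod_cast hn
  have hnz : ‖(n : ℂ) ^ z‖ ≤ (n : ℝ) ^ L5 := by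
    rw [norm_natCast_cpow_of_pos (by omega), ← Real.rpow_natCast]
    exact Real.rpow_le_rpow_of_exponent_le hn1 hL5
  have key : ∀ (f : ℕ → ℂ) (K : ℝ) (L m : ℕ), 0 ≤ K → (∀ m, ‖f m‖ ≤ K * ((m : ℝ) + 1) ^ L) →
      m ≤ (3 * e + c + d + δ) * n → ‖f m‖ ≤ K * Q ^ L * (n : ℝ) ^ L := by
    intro f K L m hK hf hm
    refine (hf m).trans ?_
    rw [mul_assoc, ← mul_pow]
    have hm' : (m : ℝ) ≤ (3 * e + c + d + δ) * n := by exact_mod_cast hm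
    gcongr
    rw [hQ]; linarith
  have g0 := key (fun m => (gratio u0 m)⁻¹) K0 L0 (k + (2 * e + c + d + δ) * n) hK0 h0 (by nlinarith)
  have g1 := key _ K1 L1 (e * n - k) hK1 h1 ((Nat.sub_le _ _).trans (by nlinarith))
  have g2 := key _ K2 L2 (e * n + δ * n - k) hK2 h2 ((Nat.sub_le _ _).trans (by nlinarith))
  have g3 := key _ K3 L3 (k + c * n) hK3 h3 (by nlinarith)
  have g4 := key _ K4 L4 (k + d * n) hK4 h4 (by nlinarith)
  have hn0 : (0 : ℝ) ≤ n := by positivity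
  rw [rho, norm_mul, norm_mul, norm_mul, norm_mul, norm_mul]
  calc _ ≤ (K0 * Q ^ L0 * (n : ℝ) ^ L0) * (K1 * Q ^ L1 * (n : ℝ) ^ L1) *
        (K2 * Q ^ L2 * (n : ℝ) ^ L2) * (K3 * Q ^ L3 * (n : ℝ) ^ L3) *
        (K4 * Q ^ L4 * (n : ℝ) ^ L4) * (n : ℝ) ^ L5 := by gcongr
    _ = _ := by ring

/-- A bound valid on the whole range `k ≤ e n`, obtained from `rho_local` near `x₀` and from
`rho_global` away from it, where a high power of `k / n - x₀` is bounded below. At `k = e n`, which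
is not an index of `g₁`, the factor is set to `0`; this point is far from `x₀`. -/
theorem rho_bound {e : ℕ} (he : 0 < e) (c d δ : ℕ) (u0 u1 u2 u3 u4 : ℂ) :
    ∃ K : ℝ, 0 ≤ K ∧ ∃ L N : ℕ, ∀ n k : ℕ, N ≤ n → 1 ≤ n → k ≤ e * n →
      ‖(if k < e * n then rho u0 u1 u2 u3 u4 e c d δ n k *
        (n : ℂ) ^ (u1 + u2 + u3 + u4 - u0 - 3) else 0) - rhoLimit u0 u1 u2 u3 u4 e c d δ‖ ≤
      K * (|(k : ℝ) / n - x0 e c d δ| + 1 / n +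
        (n : ℝ) ^ L * ((k : ℝ) / n - x0 e c d δ) ^ (2 * (L + 1))) := by
  obtain ⟨K1, hK1, h1⟩ := (rho_local he c d δ u0 u1 u2 u3 u4).exists_nonneg
  rw [IsBigOWith_def, ratioFilter, eventually_comap, Filter.eventually_iff, mem_prod_iff] at h1
  obtain ⟨t1, ht1, t2, ht2, hsub⟩ := h1
  obtain ⟨N, hN⟩ := mem_atTop_sets.1 ht1
  obtain ⟨η, hη, hball⟩ := Metric.mem_nhds_iff.1 ht2
  obtain ⟨K2, hK2, L, h2⟩ := rho_global e c d δ u0 u1 u2 u3 u4 (u1 + u2 + u3 + u4 - u0 - 3)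
  have hgap : 0 < e - x0 e c d δ := sub_pos.2 (x0_lt he c d δ)
  set F := rhoLimit u0 u1 u2 u3 u4 e c d δ
  set r := min η (e - x0 e c d δ) with hr
  have hr0 : 0 < r := lt_min hη hgap
  set K3 := (K2 + ‖F‖) / r ^ (2 * (L + 1)) with hK3
  have hK30 : 0 ≤ K3 := by positivity
  refine ⟨K1 + K3, by positivity, L, N, fun n k hNn hn hk => ?_⟩
  have hn1 : (1 : ℝ) ≤ n := by exact_mod_cast hn
  have hn0 : (0 : ℝ) < n := by linarith
  set X := (k : ℝ) / n - x0 e c d δ with hX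
  have hXp : 0 ≤ X ^ (2 * (L + 1)) := by rw [pow_mul]; positivity
  have hA : 0 ≤ |X| + 1 / (n : ℝ) := by positivity
  have hB : 0 ≤ (n : ℝ) ^ L * X ^ (2 * (L + 1)) := by positivity
  by_cases hfar : |X| < r
  · have hkl : k < e * n := by
      refine lt_of_le_of_ne hk fun hke => ?_
      have : X = e - x0 e c d δ := by
        rw [hX, hke]; push_cast; field_simp
      rw [this, abs_of_pos hgap] at hfar
      exact absurd (hfar.trans_le (min_le_right _ _)) (lt_irrefl _)
    rw [if_pos hkl]
    have hm : ((n, (k : ℝ) / n) : ℕ × ℝ) ∈ t1 ×ˢ t2 := by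
      refine ⟨hN n hNn, hball ?_⟩
      rw [Metric.mem_ball, Real.dist_eq]
      exact hfar.trans_le (min_le_left _ _)
    have h3 := hsub hm (n, k) rfl
    rw [Real.norm_of_nonneg (eps_nonneg _ _)] at h3
    simp only [eps] at h3
    refine h3.trans ?_
    rw [← hX]
    nlinarith [mul_nonneg hK30 hA, mul_nonneg hK30 hB, mul_nonneg hK1 hB]
  · push Not at hfar
    have h4 : ‖(if k < e * n then rho u0 u1 u2 u3 u4 e c d δ n k *
        (n : ℂ) ^ (u1 + u2 + u3 + u4 - u0 - 3) else 0)‖ ≤ K2 * (n : ℝ) ^ L := by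
      split_ifs
      · exact h2 n k hn hk
      · rw [norm_zero]; positivity
    have h5 : r ^ (2 * (L + 1)) ≤ X ^ (2 * (L + 1)) := by
      have := pow_le_pow_left₀ hr0.le hfar (2 * (L + 1))
      rwa [Even.pow_abs (even_two_mul _)] at this
    have hnL : (1 : ℝ) ≤ n ^ L := one_le_pow₀ hn1
    have h6 : (K2 + ‖F‖) * (n : ℝ) ^ L ≤ K3 * ((n : ℝ) ^ L * X ^ (2 * (L + 1))) := by
      have : (K2 + ‖F‖) * (n : ℝ) ^ L = K3 * ((n : ℝ) ^ L * r ^ (2 * (L + 1))) := by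
        rw [hK3]; field_simp
      rw [this]; gcongr
    refine (norm_sub_le _ _).trans ?_
    nlinarith [mul_nonneg hK30 hA, mul_nonneg hK1 hA, mul_nonneg hK1 hB,
      mul_le_mul_of_nonneg_left hnL (norm_nonneg F)]

/-- Averaging `rho_bound` over the weights. The first absolute moment is controlled by the second one
through the inequality `|X| ≤ √n X² / 2 + 1 / (2 √n)`. -/
theorem sum_rho_bound {e : ℕ} (he : 0 < e) (c d δ : ℕ) (u0 u1 u2 u3 u4 : ℂ) :
    ∃ K : ℝ, 0 ≤ K ∧ ∃ N : ℕ, ∀ n : ℕ, N ≤ n → 1 ≤ n →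
      ‖(n : ℂ) ^ (u1 + u2 + u3 + u4 - u0 - 3) *
          ∑ k ∈ Finset.range (e * n), (wn e c d δ n k : ℂ) * rho u0 u1 u2 u3 u4 e c d δ n k -
        rhoLimit u0 u1 u2 u3 u4 e c d δ *
          ((∑ k ∈ Finset.range (e * n + 1), wn e c d δ n k : ℝ) : ℂ)‖ ≤
      K / √n * ∑ k ∈ Finset.range (e * n + 1), wn e c d δ n k := by
  obtain ⟨K, hK, L, N, h⟩ := rho_bound he c d δ u0 u1 u2 u3 u4
  obtain ⟨M1, hM1, m1⟩ := normalized_moment_bound he c d δ 1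
  obtain ⟨M2, hM2, m2⟩ := normalized_moment_bound he c d δ (L + 1)
  refine ⟨K * (M1 / 2 + 1 / 2 + 1 + M2), by positivity, N, fun n hN hn => ?_⟩
  have hn1 : (1 : ℝ) ≤ n := by exact_mod_cast hn
  have hn0 : (0 : ℝ) < n := by linarith
  specialize m1 n hn
  specialize m2 n hn
  set z := u1 + u2 + u3 + u4 - u0 - 3
  set F := rhoLimit u0 u1 u2 u3 u4 e c d δ
  set I : ℕ → ℂ := fun k => if k < e * n then rho u0 u1 u2 u3 u4 e c d δ n k * (n : ℂ) ^ z else 0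
    with hI
  have e1 : (n : ℂ) ^ z *
        ∑ k ∈ Finset.range (e * n), (wn e c d δ n k : ℂ) * rho u0 u1 u2 u3 u4 e c d δ n k -
        F * ((∑ k ∈ Finset.range (e * n + 1), wn e c d δ n k : ℝ) : ℂ) =
      ∑ k ∈ Finset.range (e * n + 1), (wn e c d δ n k : ℂ) * (I k - F) := by
    simp only [mul_sub, Finset.sum_sub_distrib]
    congr 1
    · rw [Finset.sum_range_succ, Finset.mul_sum]
      have : I (e * n) = 0 := by simp [hI]
      rw [this, mul_zero, add_zero]
      refine Finset.sum_congr rfl fun k hk => ?_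
      have hk : k < e * n := by simpa using hk
      simp only [hI, if_pos hk]
      ring
    · push_cast
      rw [Finset.mul_sum]
      exact Finset.sum_congr rfl fun k _ => mul_comm _ _
  rw [e1]
  have hsq : (0 : ℝ) < √n := Real.sqrt_pos.2 hn0
  have hsq2 : √(n : ℝ) * √n = n := Real.mul_self_sqrt hn0.le
  have hsq1 : (1 : ℝ) ≤ √n := Real.one_le_sqrt.2 hn1
  have e2 : ∀ k ∈ Finset.range (e * n + 1), ‖(wn e c d δ n k : ℂ) * (I k - F)‖ ≤
      K * (√n / 2) * (wn e c d δ n k * ((k : ℝ) / n - x0 e c d δ) ^ (2 * 1)) +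
      K * (3 / 2 / √n) * wn e c d δ n k +
      K * (n : ℝ) ^ L * (wn e c d δ n k * ((k : ℝ) / n - x0 e c d δ) ^ (2 * (L + 1))) := by
    intro k hk
    have hk : k ≤ e * n := by simpa [Nat.lt_succ_iff] using hk
    have hw := wn_nonneg e c d δ n k
    have h1 := h n k hN hn hk
    rw [norm_mul, norm_real, Real.norm_of_nonneg hw]
    generalize (k : ℝ) / n - x0 e c d δ = X at *
    have h2 : |X| ≤ √n / 2 * X ^ 2 + 1 / 2 / √n := by
      have h3 : 0 ≤ (√n * |X| - 1) ^ 2 / (2 * √n) := by positivity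
      have h4 : (√n * |X| - 1) ^ 2 / (2 * √n) = √n / 2 * |X| ^ 2 + 1 / 2 / √n - |X| := by
        field_simp; ring
      rw [h4, sq_abs] at h3
      linarith
    have h3 : 1 / (n : ℝ) ≤ 1 / √n := by
      apply one_div_le_one_div_of_le hsq
      nlinarith
    have h5 : ‖I k - F‖ ≤ K * (√n / 2 * X ^ 2 + 3 / 2 / √n + (n : ℝ) ^ L * X ^ (2 * (L + 1))) := by
      refine h1.trans (mul_le_mul_of_nonneg_left ?_ hK)
      have : 3 / 2 / √(n : ℝ) = 1 / 2 / √n + 1 / √n := by ring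
      linarith
    calc wn e c d δ n k * ‖I k - F‖ ≤ wn e c d δ n k * _ := mul_le_mul_of_nonneg_left h5 hw
      _ = _ := by ring
  refine (norm_sum_le _ _).trans ((Finset.sum_le_sum e2).trans ?_)
  rw [Finset.sum_add_distrib, Finset.sum_add_distrib, ← Finset.mul_sum, ← Finset.mul_sum,
    ← Finset.mul_sum]
  have hW : 0 ≤ ∑ k ∈ Finset.range (e * n + 1), wn e c d δ n k :=
    Finset.sum_nonneg fun k _ => wn_nonneg _ _ _ _ _ _
  generalize ∑ k ∈ Finset.range (e * n + 1), wn e c d δ n k = W at *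
  have t1 := mul_le_mul_of_nonneg_left m1 (by positivity : 0 ≤ K * (√n / 2))
  have t2 := mul_le_mul_of_nonneg_left m2 (by positivity : 0 ≤ K * (n : ℝ) ^ L)
  have t3 : K * (√n / 2) * (M1 / (n : ℝ) ^ 1 * W) = K * (M1 / 2) / √n * W := by
    have : (√n : ℝ) / n = 1 / √n := by
      rw [div_eq_div_iff hn0.ne' hsq.ne', hsq2, one_mul]
    calc K * (√n / 2) * (M1 / (n : ℝ) ^ 1 * W) = K * (M1 / 2) * (√n / n) * W := by ring
      _ = _ := by rw [this]; ring
  have t4 : K * (n : ℝ) ^ L * (M2 / (n : ℝ) ^ (L + 1) * W) ≤ K * M2 / √n * W := by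
    have : K * (n : ℝ) ^ L * (M2 / (n : ℝ) ^ (L + 1) * W) = K * M2 / n * W := by
      field_simp; ring
    rw [this]
    gcongr
    nlinarith
  have t5 : K * (M1 / 2 + 1 / 2 + 1 + M2) / √n * W =
    K * (M1 / 2) / √n * W + K * (3 / 2 / √n) * W + K * M2 / √n * W := by ring
  rw [t5]
  linarith

/-! ### Reflection, and the constants `B` and `D` -/

theorem sum_wn (e c d δ n : ℕ) :
    ∑ k ∈ Finset.range (e * n + 1), wn e c d δ n k = totalMass e c d δ n := by
  have h := saalschutz (e * n) (c * n) (d * n) (δ * n)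
  unfold totalMass
  simp only [add_mul, mul_assoc] at h ⊢
  rw [← h]
  refine Finset.sum_congr rfl fun k _ => ?_
  rw [wn]
  simp only [add_mul, mul_assoc]

theorem one_lt_growth {e : ℕ} (he : 0 < e) (c d δ : ℕ) : 1 < growth e c d δ := by
  have key : ∀ x y : ℕ, 0 < x → 0 < y →
      (x : ℝ) ^ x * (y : ℝ) ^ y < ((x + y : ℕ) : ℝ) ^ (x + y) := by
    intro x y hx hy
    have hx' : (0 : ℝ) < x := by exact_mod_cast hx
    have hy' : (0 : ℝ) < y := by exact_mod_cast hy
    rw [pow_add]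
    push_cast
    exact mul_lt_mul'' (pow_lt_pow_left₀ (by linarith) hx'.le hx.ne')
      (pow_lt_pow_left₀ (by linarith) hy'.le hy.ne') (by positivity) (by positivity)
  have h0 := key (e + c) (e + d + δ) (by omega) (by omega)
  have h1 := key (e + d) (e + δ) (by omega) (by omega)
  have h2 := key e (e + c + δ) (by omega) (by omega)
  rw [show e + c + (e + d + δ) = 2 * e + c + d + δ by ring] at h0
  rw [show e + d + (e + δ) = 2 * e + d + δ by ring] at h1
  rw [show e + (e + c + δ) = 2 * e + c + δ by ring] at h2
  have he' : (0 : ℝ) < e := by exact_mod_cast he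
  rw [growth, one_lt_div (by positivity)]
  refine lt_of_eq_of_lt ?_ (mul_lt_mul'' (mul_lt_mul'' h0 h1 (by positivity) (by positivity)) h2
    (by positivity) (by positivity))
  ring

theorem c0_pos {e : ℕ} (he : 0 < e) (c d δ : ℕ) : 0 < c0 e c d δ := by
  unfold c0; positivity

theorem rhoLimit_ne_zero {e : ℕ} (he : 0 < e) (c d δ : ℕ) (u0 u1 u2 u3 u4 : ℂ) :
    rhoLimit u0 u1 u2 u3 u4 e c d δ ≠ 0 := by
  have hs := s2_pos he c d δ
  have he' : (0 : ℝ) < e := by exact_mod_cast he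
  have key : ∀ (x : ℝ) (w : ℂ), 0 < x → (x : ℂ) ^ w ≠ 0 := fun x w hx =>
    cpow_ne_zero_iff.2 (Or.inl (ofReal_ne_zero.2 hx.ne'))
  unfold rhoLimit
  refine mul_ne_zero (mul_ne_zero (mul_ne_zero (mul_ne_zero ?_ ?_) ?_) ?_) ?_ <;>
    exact key _ _ (by positivity)

/-- The reflection formula, at an argument shifted by an integer. -/
theorem sin_mul_Gamma {z : ℂ} (hz : ∀ m : ℤ, z ≠ m) (j : ℕ) :
    sin (Real.pi * z) * Gamma (1 - z - j) = (-1) ^ j * (Real.pi / Gamma (j + z)) := by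
  have h := Gamma_mul_Gamma_one_sub (j + z)
  have h1 : sin (Real.pi * (j + z)) = (-1) ^ j * sin (Real.pi * z) := by
    rw [show Real.pi * (j + z) = Real.pi * z + j * Real.pi by ring]
    exact sin_antiperiodic.add_nat_mul_eq j
  have h2 : sin (Real.pi * z) ≠ 0 := by
    rw [Ne, sin_eq_zero_iff]
    rintro ⟨k, hk⟩
    apply hz k
    have : (Real.pi : ℂ) ≠ 0 := ofReal_ne_zero.2 Real.pi_ne_zero
    apply mul_left_cancel₀ this
    rw [hk, mul_comm]
  have h3 : Gamma (j + z) ≠ 0 := Gamma_ne_zero fun m hm => hz (-m - j) (by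
    push_cast; linear_combination hm)
  have h4 : ((-1 : ℂ) ^ j) * (-1) ^ j = 1 := by rw [← mul_pow]; simp
  have h5 : ((-1 : ℂ) ^ j) ≠ 0 := pow_ne_zero _ (by simp)
  rw [h1, show 1 - (j + z) = 1 - z - j by ring] at h
  generalize (-1 : ℂ) ^ j = σ at *
  generalize sin (Real.pi * z) = S at *
  generalize Gamma (j + z) = G at *
  generalize Gamma (1 - z - j) = R at *
  rw [eq_div_iff (mul_ne_zero h5 h2)] at h
  rw [← mul_div_assoc, eq_div_iff h3]
  linear_combination σ * h - G * R * S * h4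

/-- Each term of `t(a) g₁(n)` is, up to the factor `π² (-1) ^ (δ n)`, a positive weight times `rho`. -/
theorem tval_mul_phiSummand {a0 a1 a2 b1 b2 : ℂ} (hb1 : ∀ k : ℤ, b1 - a0 ≠ k)
    (hb2 : ∀ k : ℤ, b2 - a0 ≠ k) {p0 p1 p2 q1 q2 : ℤ} {e c d δ : ℕ}
    (hp0 : p0 = 2 * e + c + d + δ) (hp1 : p0 - p1 = c) (hp2 : p0 - p2 = d)
    (hq1 : q1 - p0 = e) (hq2 : q2 - p0 = e + δ) {k n : ℕ} (hk : k ≤ e * n) :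
    tval a0 b1 b2 * phiSummand a0 a1 a2 b1 b2 p0 p1 p2 q1 q2 k n =
      (Real.pi : ℂ) ^ 2 * (-1) ^ (δ * n) * ((wn e c d δ n k : ℂ) *
        rho a0 (b1 - a0) (b2 - a0) (a0 - a1 + 1) (a0 - a2 + 1) e c d δ n k) := by
  have r1 := sin_mul_Gamma hb1 (e * n - k)
  have r2 := sin_mul_Gamma hb2 (e * n + δ * n - k)
  have hk' : k ≤ e * n + δ * n := by omega
  have s : ((-1 : ℂ) ^ (e * n - k)) * (-1) ^ (e * n + δ * n - k) = (-1) ^ (δ * n) := by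
    rw [← pow_add, show e * n - k + (e * n + δ * n - k) = 2 * (e * n - k) + δ * n by omega,
      pow_add, pow_mul]
    simp
  have g0 : Gamma ((k : ℂ) + (p0 : ℂ) * n + a0) =
      Gamma ((k + (2 * e + c + d + δ) * n : ℕ) + a0) := by
    rw [hp0]; push_cast; rfl
  have g1 : Gamma ((k : ℂ) - ((q1 - p0 : ℤ) : ℂ) * n + a0 - b1 + 1) =
      Gamma (1 - (b1 - a0) - (e * n - k : ℕ)) := by
    rw [hq1, Nat.cast_sub hk]; push_cast; congr 1; ring
  have g2 : Gamma ((k : ℂ) - ((q2 - p0 : ℤ) : ℂ) * n + a0 - b2 + 1) =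
      Gamma (1 - (b2 - a0) - (e * n + δ * n - k : ℕ)) := by
    rw [hq2, Nat.cast_sub hk']; push_cast; congr 1; ring
  have g3 : Gamma ((k : ℂ) + ((p0 - p1 : ℤ) : ℂ) * n + a0 - a1 + 1) =
      Gamma ((k + c * n : ℕ) + (a0 - a1 + 1)) := by
    rw [hp1]; push_cast; congr 1; ring
  have g4 : Gamma ((k : ℂ) + ((p0 - p2 : ℤ) : ℂ) * n + a0 - a2 + 1) =
      Gamma ((k + d * n : ℕ) + (a0 - a2 + 1)) := by
    rw [hp2]; push_cast; congr 1; ring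
  have f : ∀ m : ℕ, (m.factorial : ℂ) ≠ 0 := fun m => by exact_mod_cast m.factorial_ne_zero
  rw [phiSummand, tval, g0, g1, g2, g3, g4, Gamma_nat_eq_factorial, rho, wn, wt, ← s]
  simp only [gratio, inv_div]
  push_cast
  have f0 := f (k + (2 * e + c + d + δ) * n)
  have f1 := f (e * n - k)
  have f2 := f (e * n + δ * n - k)
  have f3 := f (k + c * n)
  have f4 := f (k + d * n)
  have f5 := f k
  simp only [div_eq_mul_inv, mul_inv] at r1 r2 ⊢
  generalize ((k + (2 * e + c + d + δ) * n).factorial : ℂ) = y0 at *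
  generalize ((e * n - k).factorial : ℂ) = y1 at *
  generalize ((e * n + δ * n - k).factorial : ℂ) = y2 at *
  generalize ((k + c * n).factorial : ℂ) = y3 at *
  generalize ((k + d * n).factorial : ℂ) = y4 at *
  generalize (k.factorial : ℂ) = y5 at *
  generalize Gamma ((k : ℂ) + (2 * e + c + d + δ) * n + a0) = G0 at *
  generalize (Gamma ((k : ℂ) + c * n + (a0 - a1 + 1)))⁻¹ = G3 at *
  generalize (Gamma ((k : ℂ) + d * n + (a0 - a2 + 1)))⁻¹ = G4 at *
  generalize (Gamma (((e * n - k : ℕ) : ℂ) + (b1 - a0)))⁻¹ = G1 at *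
  generalize (Gamma (((e * n + δ * n - k : ℕ) : ℂ) + (b2 - a0)))⁻¹ = G2 at *
  generalize Gamma (1 - (b1 - a0) - ((e * n - k : ℕ) : ℂ)) = R1 at *
  generalize Gamma (1 - (b2 - a0) - ((e * n + δ * n - k : ℕ) : ℂ)) = R2 at *
  rw [show sin (Real.pi * (b1 - a0)) * sin (Real.pi * (b2 - a0)) *
    (G0 * R1 * R2 * (y5⁻¹ * G3 * G4)) = (sin (Real.pi * (b1 - a0)) * R1) *
      (sin (Real.pi * (b2 - a0)) * R2) * (G0 * (y5⁻¹ * G3 * G4)) by ring, r1, r2]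
  field_simp

theorem ofReal_cpow_eq_exp {x : ℝ} (hx : 0 < x) (w : ℂ) :
    (x : ℂ) ^ w = cexp (Real.log x * w) := by
  rw [cpow_def_of_ne_zero (ofReal_ne_zero.2 hx.ne'), ofReal_log hx.le]

theorem ofReal_sqrt_eq_exp {x : ℝ} (hx : 0 < x) : ((√x : ℝ) : ℂ) = cexp (Real.log x * (1 / 2)) := by
  rw [← ofReal_cpow_eq_exp hx, Real.sqrt_eq_rpow, ofReal_cpow hx.le]
  norm_num

/-- Both sides are exponentials of linear combinations of logarithms of positive reals, and the
coefficients agree. -/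
theorem Bval_eq {a0 a1 a2 b1 b2 : ℂ} {p0 p1 p2 q1 q2 : ℤ} {e : ℕ} (he : 0 < e) {c d δ : ℕ}
    (hp0 : p0 = 2 * e + c + d + δ) (hp1 : p1 = 2 * e + d + δ) (hp2 : p2 = 2 * e + c + δ)
    (hq1 : q1 = 3 * e + c + d + δ) (hq2 : q2 = 3 * e + c + d + 2 * δ) :
    Bval a0 a1 a2 b1 b2 p0 p1 p2 q1 q2 = (Real.pi : ℂ) ^ 2 *
      rhoLimit a0 (b1 - a0) (b2 - a0) (a0 - a1 + 1) (a0 - a2 + 1) e c d δ * (c0 e c d δ : ℂ) := by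
  have he' : (0 : ℝ) < e := by exact_mod_cast he
  have hs := s2_pos he c d δ
  have hx0 : (p0 : ℂ) = ((2 * e + c + d + δ : ℝ) : ℂ) := by rw [hp0]; push_cast; rfl
  have hx1 : (p1 : ℂ) = ((2 * e + d + δ : ℝ) : ℂ) := by rw [hp1]; push_cast; rfl
  have hx2 : (p2 : ℂ) = ((2 * e + c + δ : ℝ) : ℂ) := by rw [hp2]; push_cast; rfl
  have hxs : ((p0 * p1 + p1 * p2 + p2 * p0 - q1 * q2 : ℤ) : ℂ) = ((s2 e c d δ : ℝ) : ℂ) := by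
    rw [hp0, hp1, hp2, hq1, hq2, s2]; push_cast; ring
  have hy1 : ((q1 - p0 : ℤ) : ℂ) = ((e : ℝ) : ℂ) := by
    rw [hp0, hq1]; push_cast; ring
  have hy2 : ((q1 - p1 : ℤ) : ℂ) = ((e + c : ℝ) : ℂ) := by
    rw [hp1, hq1]; push_cast; ring
  have hy3 : ((q1 - p2 : ℤ) : ℂ) = ((e + d : ℝ) : ℂ) := by
    rw [hp2, hq1]; push_cast; ring
  have hy4 : ((q2 - p0 : ℤ) : ℂ) = ((e + δ : ℝ) : ℂ) := by
    rw [hp0, hq2]; push_cast; ring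
  have hy5 : ((q2 - p1 : ℤ) : ℂ) = ((e + c + δ : ℝ) : ℂ) := by
    rw [hp1, hq2]; push_cast; ring
  have hy6 : ((q2 - p2 : ℤ) : ℂ) = ((e + d + δ : ℝ) : ℂ) := by
    rw [hp2, hq2]; push_cast; ring
  have h2 : (2 : ℂ) = ((2 : ℝ) : ℂ) := by norm_num
  rw [Bval, rhoLimit, c0, hx0, hx1, hx2, hxs, hy1, hy2, hy3, hy4, hy5, hy6]
  rw [show (2 : ℂ) ^ ((3 : ℂ) / 2) = ((2 : ℝ) : ℂ) ^ ((3 : ℂ) / 2) by norm_num]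
  have px0 : (0 : ℝ) < 2 * e + c + d + δ := by positivity
  have px1 : (0 : ℝ) < 2 * e + d + δ := by positivity
  have px2 : (0 : ℝ) < 2 * e + c + δ := by positivity
  have py2 : (0 : ℝ) < e + c := by positivity
  have py3 : (0 : ℝ) < e + d := by positivity
  have py4 : (0 : ℝ) < e + δ := by positivity
  have py5 : (0 : ℝ) < e + c + δ := by positivity
  have py6 : (0 : ℝ) < e + d + δ := by positivity
  push_cast only [Nat.cast_add, Nat.cast_mul, Nat.cast_ofNat]
  generalize (2 * e + c + d + δ : ℝ) = x0 at *
  generalize (2 * e + d + δ : ℝ) = x1 at *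
  generalize (2 * e + c + δ : ℝ) = x2 at *
  generalize (e + c + δ : ℝ) = y5 at *
  generalize (e + d + δ : ℝ) = y6 at *
  generalize (e + c : ℝ) = y2 at *
  generalize (e + d : ℝ) = y3 at *
  generalize (e + δ : ℝ) = y4 at *
  generalize (e : ℝ) = y1 at *
  generalize s2 e c d δ = s at *
  have hpi := Real.pi_pos
  have hlog : ∀ x y z s : ℝ, 0 < x → 0 < y → 0 < z → 0 < s → ∀ w : ℂ,
      ((x * y * z / s : ℝ) : ℂ) ^ w =
        cexp ((Real.log x + Real.log y + Real.log z - Real.log s) * w) := by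
    intro x y z s hx hy hz hs w
    rw [ofReal_cpow_eq_exp (by positivity), Real.log_div (by positivity) hs.ne',
      Real.log_mul (by positivity) hz.ne', Real.log_mul hx.ne' hy.ne']
    push_cast; rfl
  have hpi2 : (Real.pi : ℂ) ^ 2 = cexp (Real.log Real.pi * 2) := by
    rw [← ofReal_cpow_eq_exp hpi]; norm_cast
  have h2pi : ((√(2 * Real.pi) ^ 3 : ℝ) : ℂ) =
      cexp ((Real.log 2 + Real.log Real.pi) * (3 / 2)) := by
    rw [ofReal_pow, ofReal_sqrt_eq_exp (by positivity), Real.log_mul two_ne_zero hpi.ne',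
      ← exp_nat_mul]
    push_cast; congr 1; ring
  have hpi1 : ((Real.pi ^ ((1 : ℝ) / 2) : ℝ) : ℂ) = cexp (Real.log Real.pi * (1 / 2)) := by
    rw [← Real.sqrt_eq_rpow, ofReal_sqrt_eq_exp hpi]
  rw [hlog x0 x1 x2 s px0 px1 px2 hs, hlog y1 y2 y3 s he' py2 py3 hs,
    hlog y4 y5 y6 s py4 py5 py6 hs, hlog x1 y2 y5 s px1 py2 py5 hs,
    hlog x2 y3 y6 s px2 py3 py6 hs, hpi2, hpi1, ofReal_div, ofReal_mul (√(2 * Real.pi) ^ 3), h2pi]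
  simp only [ofReal_mul]
  rw [ofReal_sqrt_eq_exp px0, ofReal_sqrt_eq_exp px1, ofReal_sqrt_eq_exp px2,
    ofReal_sqrt_eq_exp he', ofReal_sqrt_eq_exp py2, ofReal_sqrt_eq_exp py3,
    ofReal_sqrt_eq_exp py4, ofReal_sqrt_eq_exp py5, ofReal_sqrt_eq_exp py6,
    ofReal_cpow_eq_exp px0, ofReal_cpow_eq_exp px1, ofReal_cpow_eq_exp px2,
    ofReal_cpow_eq_exp he', ofReal_cpow_eq_exp py2, ofReal_cpow_eq_exp py3,
    ofReal_cpow_eq_exp py4, ofReal_cpow_eq_exp py5, ofReal_cpow_eq_exp py6,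
    ofReal_cpow_eq_exp hs, ofReal_cpow_eq_exp two_pos]
  simp only [← exp_add, ← exp_sub]
  congr 1
  ring

theorem Dval_eq {p0 p1 p2 q1 q2 : ℤ} {e c d δ : ℕ}
    (hp0 : p0 = 2 * e + c + d + δ) (hp1 : p1 = 2 * e + d + δ) (hp2 : p2 = 2 * e + c + δ)
    (hq1 : q1 = 3 * e + c + d + δ) (hq2 : q2 = 3 * e + c + d + 2 * δ) :
    Dval p0 p1 p2 q1 q2 = (-1) ^ δ * growth e c d δ := by
  have e0 : p0 = (2 * e + c + d + δ : ℕ) := by rw [hp0]; push_cast; ring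
  have e1 : p1 = (2 * e + d + δ : ℕ) := by rw [hp1]; push_cast; ring
  have e2 : p2 = (2 * e + c + δ : ℕ) := by rw [hp2]; push_cast; ring
  have y1 : q1 - p0 = (e : ℕ) := by rw [hp0, hq1]; ring
  have y2 : q1 - p1 = (e + c : ℕ) := by rw [hp1, hq1]; push_cast; ring
  have y3 : q1 - p2 = (e + d : ℕ) := by rw [hp2, hq1]; push_cast; ring
  have y4 : q2 - p0 = (e + δ : ℕ) := by rw [hp0, hq2]; push_cast; ring
  have y5 : q2 - p1 = (e + c + δ : ℕ) := by rw [hp1, hq2]; push_cast; ring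
  have y6 : q2 - p2 = (e + d + δ : ℕ) := by rw [hp2, hq2]; push_cast; ring
  have sg : (-1 : ℝ) ^ (q1 + q2) = (-1) ^ δ := by
    rw [show q1 + q2 = ((2 * (3 * e + c + d + δ) + δ : ℕ) : ℤ) by rw [hq1, hq2]; push_cast; ring,
      zpow_natCast, pow_add, pow_mul]
    simp
  rw [Dval, y1, y2, y3, y4, y5, y6, e0, e1, e2, sg, growth]
  simp only [Int.cast_natCast, Real.rpow_natCast]
  rw [mul_div_assoc]


/-- The asymptotics of the weighted sum, with `rhoLimit * c0` and `growth` in place of `B` and `D`.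
Relative to the main term, the error is the sum of those of `totalMass_asymptotics` and
`sum_rho_bound`. -/
theorem weighted_sum_asymptotics {e : ℕ} (he : 0 < e) (c d δ : ℕ) (u0 u1 u2 u3 u4 : ℂ) :
    ∃ K : ℝ, 0 < K ∧ ∃ N : ℕ, 0 < N ∧ ∀ n : ℕ, N ≤ n →
      ‖(∑ k ∈ Finset.range (e * n), (wn e c d δ n k : ℂ) * rho u0 u1 u2 u3 u4 e c d δ n k) /
          (rhoLimit u0 u1 u2 u3 u4 e c d δ * (c0 e c d δ : ℂ) * ((growth e c d δ ^ n : ℝ) : ℂ) *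
            (n : ℂ) ^ (-(u1 + u2 + u3 + u4 - u0 - 3) - 3 / 2)) - 1‖ ≤ K / √n := by
  obtain ⟨K, hK, N1, h⟩ := sum_rho_bound he c d δ u0 u1 u2 u3 u4
  obtain ⟨V, hV, hW⟩ := totalMass_asymptotics he c d δ
  obtain ⟨K', hK', hV⟩ := hV.exists_nonneg
  rw [IsBigOWith_def, eventually_atTop] at hV
  obtain ⟨N2, hV⟩ := hV
  have hF := rhoLimit_ne_zero he c d δ u0 u1 u2 u3 u4
  set F := rhoLimit u0 u1 u2 u3 u4 e c d δ
  have hF' : 0 < ‖F‖ := norm_pos_iff.2 hF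
  refine ⟨K' + K * (1 + K') / ‖F‖ + 1, by positivity, max (max N1 N2) 1, by positivity,
    fun n hn => ?_⟩
  have hnN1 : N1 ≤ n := by omega
  have hnN2 : N2 ≤ n := by omega
  have hn : 1 ≤ n := by omega
  have hn1 : (1 : ℝ) ≤ n := by exact_mod_cast hn
  have hn0 : (0 : ℝ) < n := by linarith
  have hnC : (n : ℂ) ≠ 0 := by exact_mod_cast hn0.ne'
  have h := h n hnN1 hn
  have hV := hV n hnN2
  rw [Real.norm_of_nonneg (by positivity : 0 ≤ 1 / (n : ℝ))] at hV
  have hsq : (0 : ℝ) < √n := Real.sqrt_pos.2 hn0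
  have hsq1 : (1 : ℝ) ≤ √n := Real.one_le_sqrt.2 hn1
  have hinv : 1 / (n : ℝ) ≤ 1 / √n := by
    apply one_div_le_one_div_of_le hsq
    nlinarith [Real.mul_self_sqrt hn0.le]
  have hM0 : 0 < c0 e c d δ * growth e c d δ ^ n / √n ^ 3 := by
    have := c0_pos he c d δ
    have := one_lt_growth he c d δ
    positivity
  set z := u1 + u2 + u3 + u4 - u0 - 3
  set S := ∑ k ∈ Finset.range (e * n), (wn e c d δ n k : ℂ) * rho u0 u1 u2 u3 u4 e c d δ n k
  rw [sum_wn, hW n hn, mul_div_assoc] at h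
  have hden : F * (c0 e c d δ : ℂ) * ((growth e c d δ ^ n : ℝ) : ℂ) * (n : ℂ) ^ (-z - 3 / 2) =
      F * ((c0 e c d δ * growth e c d δ ^ n / √n ^ 3 : ℝ) : ℂ) / (n : ℂ) ^ z := by
    have h1 : ((√n ^ 3 : ℝ) : ℂ) = (n : ℂ) ^ ((3 : ℂ) / 2) := by
      have h2 := ofReal_cpow_eq_exp hn0 (3 / 2)
      rw [ofReal_natCast] at h2
      rw [ofReal_pow, ofReal_sqrt_eq_exp hn0, ← exp_nat_mul, h2]
      push_cast; congr 1; ring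
    rw [cpow_sub _ _ hnC, cpow_neg, ofReal_div, h1]
    push_cast
    field_simp
  set M := c0 e c d δ * growth e c d δ ^ n / √n ^ 3
  have hMC : (M : ℂ) ≠ 0 := ofReal_ne_zero.2 hM0.ne'
  have hnz : (n : ℂ) ^ z ≠ 0 := cpow_ne_zero_iff.2 (Or.inl hnC)
  have hsplit : S / (F * (M : ℂ) / (n : ℂ) ^ z) - 1 =
      ((V n - 1 : ℝ) : ℂ) + ((n : ℂ) ^ z * S - F * ((V n * M : ℝ) : ℂ)) / (F * M) := by
    push_cast
    field_simp
    ring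
  rw [hden, hsplit]
  have hVle : V n ≤ 1 + K' := by
    have h1 : V n - 1 ≤ K' * (1 / n) := (le_abs_self _).trans hV
    have h2 : 1 / (n : ℝ) ≤ 1 := by rw [div_le_one hn0]; exact hn1
    nlinarith
  have hpart1 : ‖((V n - 1 : ℝ) : ℂ)‖ ≤ K' / √n := by
    rw [norm_real]
    refine hV.trans ((mul_le_mul_of_nonneg_left hinv hK').trans (le_of_eq ?_))
    ring
  have hpart2 : ‖((n : ℂ) ^ z * S - F * ((V n * M : ℝ) : ℂ)) / (F * M)‖ ≤
      K * (1 + K') / ‖F‖ / √n := by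
    rw [norm_div, norm_mul, norm_real, Real.norm_of_nonneg hM0.le,
      div_le_iff₀ (by positivity)]
    refine h.trans ?_
    calc K / √n * (V n * M) ≤ K / √n * ((1 + K') * M) := by gcongr
      _ = _ := by field_simp
  refine (norm_add_le _ _).trans ((add_le_add hpart1 hpart2).trans ?_)
  rw [add_div, add_div]
  have : (0 : ℝ) ≤ 1 / √n := by positivity
  linarith

end

/-- For `p ∈ S(ℤ)` and `a ∈ ℂ⁵` with `Re s(a) > 0`, `a₀ ∉ ℤ≤0`,
`b₁−a₀ ∉ ℤ`, `b₂−a₀ ∉ ℤ`, the first component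
`g₁(n) = Σ_{k=0}^{(q₁−p₀)n−1} φ(k;n)` satisfies `|D(p)| > 1` and
`t(a)·g₁(n) = B(a;p)·D(p)ⁿ·n^{−s(a)−1/2}·(1+O(n^{−1/2}))` as `n → ∞`. -/
theorem first_component_asymptotics (p0 p1 p2 q1 q2 : ℤ)
    (hbal : q1 + q2 = p0 + p1 + p2)
    (h1 : p1 ≤ p0) (h2 : p2 ≤ p0) (h3 : p0 < q1) (h4 : q1 ≤ q2) (h5 : q2 < p1 + p2)
    (a0 a1 a2 b1 b2 : ℂ)
    (hs : 0 < (b1 + b2 - a0 - a1 - a2).re)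
    (ha0 : ∀ k : ℤ, k ≤ 0 → a0 ≠ (k : ℂ))
    (hb1 : ∀ k : ℤ, b1 - a0 ≠ (k : ℂ)) (hb2 : ∀ k : ℤ, b2 - a0 ≠ (k : ℂ)) :
    1 < |Dval p0 p1 p2 q1 q2| ∧
    ∃ K : ℝ, 0 < K ∧ ∃ N : ℕ, ∀ n : ℕ, N ≤ n →
      ‖tval a0 b1 b2 *
            (∑ k ∈ Finset.range ((q1 - p0).toNat * n),
              phiSummand a0 a1 a2 b1 b2 p0 p1 p2 q1 q2 k n) /
          (Bval a0 a1 a2 b1 b2 p0 p1 p2 q1 q2 * ((Dval p0 p1 p2 q1 q2 ^ n : ℝ) : ℂ) *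
            (n : ℂ) ^ (-(b1 + b2 - a0 - a1 - a2) - 1 / 2)) - 1‖ ≤
        K * (n : ℝ) ^ (-(1 : ℝ) / 2) := by
  obtain ⟨e, he⟩ := Int.eq_ofNat_of_zero_le (sub_nonneg.2 h3.le)
  obtain ⟨c, hc⟩ := Int.eq_ofNat_of_zero_le (sub_nonneg.2 h1)
  obtain ⟨d, hd⟩ := Int.eq_ofNat_of_zero_le (sub_nonneg.2 h2)
  obtain ⟨δ, hδ⟩ := Int.eq_ofNat_of_zero_le (sub_nonneg.2 h4)
  have he0 : 0 < e := by omega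
  have hp0 : p0 = 2 * e + c + d + δ := by omega
  have hp1 : p1 = 2 * e + d + δ := by omega
  have hp2 : p2 = 2 * e + c + δ := by omega
  have hq1 : q1 = 3 * e + c + d + δ := by omega
  have hq2 : q2 = 3 * e + c + d + 2 * δ := by omega
  rw [Bval_eq he0 hp0 hp1 hp2 hq1 hq2, Dval_eq hp0 hp1 hp2 hq1 hq2]
  have hG := one_lt_growth he0 c d δ
  constructor
  · rw [abs_mul, abs_pow, abs_neg, abs_one, one_pow, one_mul, abs_of_pos (by linarith)]
    exact hG
  obtain ⟨K, hK, N, hN, h⟩ := weighted_sum_asymptotics he0 c d δ a0 (b1 - a0) (b2 - a0)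
    (a0 - a1 + 1) (a0 - a2 + 1)
  refine ⟨K, hK, N, fun n hn => ?_⟩
  have hsum : tval a0 b1 b2 * (∑ k ∈ Finset.range ((q1 - p0).toNat * n),
      phiSummand a0 a1 a2 b1 b2 p0 p1 p2 q1 q2 k n) =
      (Real.pi : ℂ) ^ 2 * (-1) ^ (δ * n) * ∑ k ∈ Finset.range (e * n),
        (wn e c d δ n k : ℂ) *
          rho a0 (b1 - a0) (b2 - a0) (a0 - a1 + 1) (a0 - a2 + 1) e c d δ n k := by
    rw [he, Int.toNat_natCast, Finset.mul_sum, Finset.mul_sum]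
    refine Finset.sum_congr rfl fun k hk => ?_
    exact tval_mul_phiSummand hb1 hb2 hp0 hc hd he (by omega) (Finset.mem_range.1 hk).le
  have hpow : (n : ℝ) ^ (-(1 : ℝ) / 2) = 1 / √n := by
    rw [neg_div, Real.rpow_neg (Nat.cast_nonneg n), ← Real.sqrt_eq_rpow, one_div]
  rw [hpow, mul_one_div]
  convert h n hn using 3
  rw [hsum, show -(b1 - a0 + (b2 - a0) + (a0 - a1 + 1) + (a0 - a2 + 1) - a0 - 3) - 3 / 2 =
    -(b1 + b2 - a0 - a1 - a2) - 1 / 2 by ring]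
  have hsign : ((-1 : ℂ) ^ (δ * n)) ≠ 0 := pow_ne_zero _ (by simp)
  have hpi : (Real.pi : ℂ) ^ 2 * (-1) ^ (δ * n) ≠ 0 :=
    mul_ne_zero (pow_ne_zero _ (ofReal_ne_zero.2 Real.pi_ne_zero)) hsign
  rw [mul_pow, ← pow_mul]
  refine Eq.trans ?_ (mul_div_mul_left _ _ hpi)
  congr 1
  push_cast
  ring
end

section
/- Let p = (p₀,p₁,p₂;q₁,q₂) ∈ ℝ⁵ satisfy p₀+p₁+p₂ = q₁+q₂ and p₁, p₂ ≤ p₀ < q₁ ≤ q₂ < p₁+p₂. Then, with the convention 0⁰ = 1, |D(p)| > Φ₁(0) > 1, where |D(p)| = p₀^{p₀} p₁^{p₁} p₂^{p₂} / ∏_{i=0}^{2} ∏_{j=1}^{2} (q_j − p_i)^{q_j − p_i} and Φ₁(0) := p₀^{p₀} / ((p₀−p₁)^{p₀−p₁}·(p₀−p₂)^{p₀−p₂}·(q₁−p₀)^{q₁−p₀}·(q₂−p₀)^{q₂−p₀}). -/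
/-!
Put `g x = x ^ x` for `0 ≤ x` (with `g 0 = 1`). As `x log x` is strictly convex on `[0, ∞)`,
`g` satisfies `g (a + s) * g (a + t) < g a * g (a + s + t)` for `0 ≤ a` and `0 < s, t`
(`selfPow_exchange`).

Set `s = q₁ - p₀`, `t = q₂ - p₀`, `a = p₀ - p₁`, `b = p₀ - p₂`. By the balancing condition,
`p₂ = a + s + t`, `p₁ = b + s + t` and `p₀ = a + b + s + t`. After cancelling common factors the
first inequality is the product of the exchange inequalities at `a` and at `b`, while the second is
`g a * g b * g s * g t < g (a + b + s + t)`, the supermultiplicativity of `g`, which is the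
exchange inequality at `0` and is strict as `s` and `t` are positive.
-/

theorem selfPow_eq_exp {x : ℝ} (hx : 0 ≤ x) : x ^ x = Real.exp (x * Real.log x) := by
  rcases hx.eq_or_lt with rfl | hx
  · simp
  · rw [Real.rpow_def_of_pos hx, mul_comm]

theorem selfPow_pos {x : ℝ} (hx : 0 ≤ x) : 0 < x ^ x := by
  rw [selfPow_eq_exp hx]
  exact Real.exp_pos _

/-- Strict convexity of `x log x`, exponentiated: `a + s` and `a + t` are the convex combinations
of `a` and `a + s + t` with weights `t / (s + t)`, `s / (s + t)` and vice versa. -/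
theorem selfPow_exchange {a s t : ℝ} (ha : 0 ≤ a) (hs : 0 < s) (ht : 0 < t) :
    (a + s) ^ (a + s) * (a + t) ^ (a + t) < a ^ a * (a + s + t) ^ (a + s + t) := by
  rw [selfPow_eq_exp (by linarith : 0 ≤ a + s), selfPow_eq_exp (by linarith : 0 ≤ a + t),
    selfPow_eq_exp ha, selfPow_eq_exp (by linarith : 0 ≤ a + s + t), ← Real.exp_add,
    ← Real.exp_add, Real.exp_lt_exp]
  have hst : 0 < s + t := by linarith
  have hsum : s / (s + t) + t / (s + t) = 1 := by field_simp
  have hsum' : t / (s + t) + s / (s + t) = 1 := by rw [add_comm, hsum]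
  have hmem : a ∈ Set.Ici (0 : ℝ) := ha
  have hmem' : a + s + t ∈ Set.Ici (0 : ℝ) := by
    simp only [Set.mem_Ici]
    linarith
  have hne : a ≠ a + s + t := by linarith
  have k1 := Real.strictConvexOn_mul_log.2 hmem hmem' hne (div_pos ht hst) (div_pos hs hst) hsum'
  have k2 := Real.strictConvexOn_mul_log.2 hmem hmem' hne (div_pos hs hst) (div_pos ht hst) hsum
  have e1 : t / (s + t) * a + s / (s + t) * (a + s + t) = a + s := by
    field_simp
    ring
  have e2 : s / (s + t) * a + t / (s + t) * (a + s + t) = a + t := by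
    field_simp
    ring
  simp only [smul_eq_mul, e1, e2] at k1 k2
  linear_combination k1 + k2 +
    (a * Real.log a + (a + s + t) * Real.log (a + s + t)) * hsum

theorem selfPow_mul_lt {s t : ℝ} (hs : 0 < s) (ht : 0 < t) :
    s ^ s * t ^ t < (s + t) ^ (s + t) := by
  simpa using selfPow_exchange le_rfl hs ht

theorem selfPow_mul_le {a c : ℝ} (ha : 0 ≤ a) (hc : 0 < c) :
    a ^ a * c ^ c ≤ (a + c) ^ (a + c) := by
  rcases ha.eq_or_lt with rfl | ha
  · simp
  · exact (selfPow_mul_lt ha hc).le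


/-- For real `p = (p₀,p₁,p₂;q₁,q₂)` with `p₀+p₁+p₂ = q₁+q₂` and
`p₁, p₂ ≤ p₀ < q₁ ≤ q₂ < p₁+p₂`, one has (with the `rpow` convention `0⁰ = 1`)
`|D(p)| > Φ₁(0) > 1`, where
`|D(p)| = p₀^p₀ p₁^p₁ p₂^p₂ / ∏_{i,j} (q_j − p_i)^{q_j − p_i}` and
`Φ₁(0) = p₀^p₀ / ((p₀−p₁)^{p₀−p₁}(p₀−p₂)^{p₀−p₂}(q₁−p₀)^{q₁−p₀}(q₂−p₀)^{q₂−p₀})`. -/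
theorem absD_gt_phiOne_gt_one (p0 p1 p2 q1 q2 : ℝ)
    (hbal : p0 + p1 + p2 = q1 + q2)
    (h1 : p1 ≤ p0) (h2 : p2 ≤ p0) (h3 : p0 < q1) (h4 : q1 ≤ q2) (h5 : q2 < p1 + p2) :
    p0 ^ p0 / ((p0 - p1) ^ (p0 - p1) * (p0 - p2) ^ (p0 - p2) *
        (q1 - p0) ^ (q1 - p0) * (q2 - p0) ^ (q2 - p0)) <
      p0 ^ p0 * p1 ^ p1 * p2 ^ p2 /
        ((q1 - p0) ^ (q1 - p0) * (q1 - p1) ^ (q1 - p1) * (q1 - p2) ^ (q1 - p2) *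
          (q2 - p0) ^ (q2 - p0) * (q2 - p1) ^ (q2 - p1) * (q2 - p2) ^ (q2 - p2)) ∧
    1 < p0 ^ p0 / ((p0 - p1) ^ (p0 - p1) * (p0 - p2) ^ (p0 - p2) *
        (q1 - p0) ^ (q1 - p0) * (q2 - p0) ^ (q2 - p0)) := by
  obtain ⟨s, rfl⟩ : ∃ s, q1 = p0 + s := ⟨q1 - p0, by ring⟩
  obtain ⟨t, rfl⟩ : ∃ t, q2 = p0 + t := ⟨q2 - p0, by ring⟩
  obtain ⟨a, ha⟩ : ∃ a, a = p0 - p1 := ⟨_, rfl⟩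
  obtain ⟨b, hb⟩ : ∃ b, b = p0 - p2 := ⟨_, rfl⟩
  have hs : 0 < s := by linarith
  have ht : 0 < t := by linarith
  have ha0 : 0 ≤ a := by linarith
  have hb0 : 0 ≤ b := by linarith
  -- The balancing condition expresses everything in terms of `a`, `b`, `s` and `t`.
  obtain rfl : p2 = a + s + t := by linarith
  obtain rfl : p1 = b + s + t := by linarith
  obtain rfl : p0 = a + (b + (s + t)) := by linarith
  rw [show a + (b + (s + t)) - (b + s + t) = a by ring,
    show a + (b + (s + t)) - (a + s + t) = b by ring,
    show a + (b + (s + t)) + s - (a + (b + (s + t))) = s by ring,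
    show a + (b + (s + t)) + t - (a + (b + (s + t))) = t by ring,
    show a + (b + (s + t)) + s - (b + s + t) = a + s by ring,
    show a + (b + (s + t)) + s - (a + s + t) = b + s by ring,
    show a + (b + (s + t)) + t - (b + s + t) = a + t by ring,
    show a + (b + (s + t)) + t - (a + s + t) = b + t by ring]
  have ga := selfPow_pos ha0
  have gb := selfPow_pos hb0
  have gs := selfPow_pos hs.le
  have gt := selfPow_pos ht.le
  have gas := selfPow_pos (by linarith : 0 ≤ a + s)
  have gat := selfPow_pos (by linarith : 0 ≤ a + t)
  have gbs := selfPow_pos (by linarith : 0 ≤ b + s)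
  have gbt := selfPow_pos (by linarith : 0 ≤ b + t)
  have gp := selfPow_pos (by linarith : 0 ≤ a + (b + (s + t)))
  constructor
  · have key := mul_lt_mul'' (selfPow_exchange ha0 hs ht) (selfPow_exchange hb0 hs ht)
      (mul_pos gas gat).le (mul_pos gbs gbt).le
    rw [div_lt_div_iff₀ (by positivity) (by positivity)]
    have := mul_lt_mul_of_pos_left key (mul_pos gp (mul_pos gs gt))
    linarith only [this]
  · rw [one_lt_div (by positivity)]
    calc a ^ a * b ^ b * s ^ s * t ^ t = a ^ a * (b ^ b * (s ^ s * t ^ t)) := by ring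
      _ < a ^ a * (b ^ b * (s + t) ^ (s + t)) := by
        gcongr
        exact selfPow_mul_lt hs ht
      _ ≤ a ^ a * (b + (s + t)) ^ (b + (s + t)) := by
        gcongr
        exact selfPow_mul_le hb0 (by linarith)
      _ ≤ _ := selfPow_mul_le ha0 (by linarith)
end

section
/- Let p = (p₀,p₁,p₂;q₁,q₂) ∈ ℝ⁵ satisfy p₀+p₁+p₂ = q₁+q₂ and p₁, p₂ ≤ p₀ < q₁ ≤ q₂ < p₁+p₂. If either (a) Δ(p) ≤ 0 or (b) 2q₁² − 2(p₁+p₂)q₁ + p₁p₂ ≥ 0, then χ(x;p) := (x+q₁−p₀)(x+q₁−p₁)(x+q₁−p₂) + x(x+q₁)(x+q₁−q₂) ≥ 0 for every real x with 0 ≤ x ≤ q₂ − q₁. -/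
/-!
Put `y = x + q₁`. Since `q₁ + q₂ = e₁`, the polynomial is the cubic
`f y = 2y³ − 2e₁y² + e₂y − e₃`, to be bounded below on `[q₁, q₂]`. The hypotheses force
`p₀, p₁, p₂ > 0`, so `f 0 < 0 < f p₀`.

If `Δ ≤ 0` and `f y < 0` for some `y ≥ q₁ > p₀`, then `f` has a root in `(0, p₀)`, one in
`(p₀, y)` and one beyond `y`; three distinct real roots make `Δ` positive
(`discr_pos_of_sign_changes`).

Under the quadratic condition, `f q₁ > 0`, `f' q₁ ≥ 0` and `f'' q₁ > 0`, so all Taylor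
coefficients of `f` at `q₁` are nonnegative.
-/

/-- A cubic `2t³ − 2e₁t² + e₂t − e₃` with signs `−, +, −` at points `u < v < w` has three
distinct real roots, hence positive discriminant. -/
theorem discr_pos_of_sign_changes {e1 e2 e3 u v w : ℝ} (huv : u ≤ v) (hvw : v ≤ w)
    (hu : 2 * u ^ 3 - 2 * e1 * u ^ 2 + e2 * u - e3 < 0)
    (hv : 0 < 2 * v ^ 3 - 2 * e1 * v ^ 2 + e2 * v - e3)
    (hw : 2 * w ^ 3 - 2 * e1 * w ^ 2 + e2 * w - e3 < 0) :
    0 < e1 ^ 2 * e2 ^ 2 + 18 * e1 * e2 * e3 - 2 * e2 ^ 3 - 8 * e1 ^ 3 * e3 - 27 * e3 ^ 2 := by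
  have hcont : Continuous fun t : ℝ => 2 * t ^ 3 - 2 * e1 * t ^ 2 + e2 * t - e3 := by fun_prop
  obtain ⟨a, ⟨_, hav⟩, ha⟩ := intermediate_value_Ioo huv hcont.continuousOn ⟨hu, hv⟩
  obtain ⟨b, ⟨hvb, hbw⟩, hb⟩ := intermediate_value_Ioo' hvw hcont.continuousOn ⟨hw, hv⟩
  simp only at ha hb
  have hab : a < b := hav.trans hvb
  -- The third root, by Vieta.
  obtain ⟨c, hc⟩ : ∃ c, e1 = a + b + c := ⟨e1 - a - b, by ring⟩
  subst hc
  have he2 : e2 = 2 * (a * b + b * c + c * a) := by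
    apply mul_left_cancel₀ (sub_ne_zero.mpr hab.ne)
    linear_combination ha - hb
  subst he2
  have he3 : e3 = 2 * (a * b * c) := by linear_combination -ha
  subst he3
  have hwc : w < c := by
    by_contra! hcw
    have h : 0 ≤ (w - a) * (w - b) * (w - c) :=
      mul_nonneg (mul_nonneg (by linarith) (by linarith)) (by linarith)
    linarith
  have hab' : 0 < b - a := by linarith
  have hbc : 0 < c - b := by linarith
  have hac : 0 < c - a := by linarith
  have hprod : 0 < 4 * ((b - a) * (c - b) * (c - a)) ^ 2 := by positivity
  linarith


/-- For real `p = (p₀,p₁,p₂;q₁,q₂)` with `p₀+p₁+p₂ = q₁+q₂` and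
`p₁, p₂ ≤ p₀ < q₁ ≤ q₂ < p₁+p₂`, if either (a) `Δ(p) ≤ 0` or
(b) `2q₁² − 2(p₁+p₂)q₁ + p₁p₂ ≥ 0`, then
`χ(x;p) = (x+q₁−p₀)(x+q₁−p₁)(x+q₁−p₂) + x(x+q₁)(x+q₁−q₂) ≥ 0` for `0 ≤ x ≤ q₂−q₁`;
here `Δ(p) = e₁²e₂² + 18e₁e₂e₃ − 2e₂³ − 8e₁³e₃ − 27e₃²` with `e₁ = p₀+p₁+p₂`,
`e₂ = p₀p₁+p₁p₂+p₂p₀+q₁q₂`, `e₃ = p₀p₁p₂`. -/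
theorem chi_nonneg_of_discriminant_or_quadratic (p0 p1 p2 q1 q2 : ℝ)
    (hbal : p0 + p1 + p2 = q1 + q2)
    (h1 : p1 ≤ p0) (h2 : p2 ≤ p0) (h3 : p0 < q1) (h4 : q1 ≤ q2) (h5 : q2 < p1 + p2)
    (hcond :
      ((p0 + p1 + p2) ^ 2 * (p0 * p1 + p1 * p2 + p2 * p0 + q1 * q2) ^ 2 +
          18 * (p0 + p1 + p2) * (p0 * p1 + p1 * p2 + p2 * p0 + q1 * q2) * (p0 * p1 * p2) -
          2 * (p0 * p1 + p1 * p2 + p2 * p0 + q1 * q2) ^ 3 -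
          8 * (p0 + p1 + p2) ^ 3 * (p0 * p1 * p2) - 27 * (p0 * p1 * p2) ^ 2 ≤ 0) ∨
        (0 ≤ 2 * q1 ^ 2 - 2 * (p1 + p2) * q1 + p1 * p2)) :
    ∀ x : ℝ, 0 ≤ x → x ≤ q2 - q1 →
      0 ≤ (x + q1 - p0) * (x + q1 - p1) * (x + q1 - p2) + x * (x + q1) * (x + q1 - q2) := by
  intro x hx _
  have hp0 : 0 < p0 := by linarith
  have hp1 : 0 < p1 := by linarith
  have hp2 : 0 < p2 := by linarith
  obtain rfl : q2 = p0 + p1 + p2 - q1 := by linarith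
  rcases hcond with hΔ | hquad
  · by_contra! hneg
    refine absurd (discr_pos_of_sign_changes (u := 0) (v := p0) (w := x + q1)
      hp0.le (by linarith) ?_ ?_ ?_) (not_lt.mpr hΔ)
    · have : 0 < p0 * p1 * p2 := by positivity
      linarith
    · have : 0 < p0 * (q1 - p0) * (p0 + p1 + p2 - q1 - p0) :=
        mul_pos (mul_pos hp0 (by linarith)) (by linarith)
      linarith
    · linarith
  · have hf : 0 ≤ (q1 - p0) * (q1 - p1) * (q1 - p2) :=
      mul_nonneg (mul_nonneg (by linarith) (by linarith)) (by linarith)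
    -- `f' q₁` exceeds the quadratic expression by `(q₁ − p₀)(3q₁ − p₁ − p₂)`.
    have hf' : 0 ≤ (q1 - p0) * (3 * q1 - p1 - p2) +
        (2 * q1 ^ 2 - 2 * (p1 + p2) * q1 + p1 * p2) :=
      add_nonneg (mul_nonneg (by linarith) (by linarith)) hquad
    -- Half of `f'' q₁`; here `q₂ < p₁ + p₂ ≤ 2p₀ < 2q₁`.
    have hf'' : 0 ≤ 6 * q1 - 2 * (p0 + p1 + p2) := by linarith
    have h₁ := mul_nonneg hf' hx
    have h₂ := mul_nonneg hf'' (sq_nonneg x)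
    have h₃ := pow_nonneg hx 3
    linarith
end

section
/- Let p = (p₀,p₁,p₂;q₁,q₂) ∈ S(ℤ) with q₁ < q₂, and assume χ(x;p) := (x+q₁−p₀)(x+q₁−p₁)(x+q₁−p₂) + x(x+q₁)(x+q₁−q₂) ≥ 0 for all 0 ≤ x ≤ q₂ − q₁. Let a = (a₀,a₁,a₂;b₁,b₂) ∈ ℂ⁵ with Re s(a) > 0, a₀ ∉ ℤ≤0, b₁ − a₀ ∉ ℤ and b₂ − a₀ ∉ ℤ. Define g₂(n) := Σ_{k=(q₁−p₀)n}^{(q₂−p₀)n − 1} φ(k;n), where φ(k;n) := Γ(k+p₀n+a₀)·Γ(k−(q₁−p₀)n+a₀−b₁+1)·Γ(k−(q₂−p₀)n+a₀−b₂+1) / (Γ(k+1)·Γ(k+(p₀−p₁)n+a₀−a₁+1)·Γ(k+(p₀−p₂)n+a₀−a₂+1)). Then there exist constants d₂ with 0 < d₂ < |D(p)|, C₂ > 0 and N₂ ∈ ℕ such that |t(a) · g₂(n)| ≤ C₂ · d₂ⁿ for all n ≥ N₂. -/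
/-!
Put `r = q₂ - q₁`, `sᵢ = q₁ - pᵢ` and `k = s₀ n + m` with `0 ≤ m < r n`. Balance of `p` gives
`r + s₀ + s₁ + s₂ = q₁`.

* Up to constants and powers of `n`, each Gamma factor is a factorial or the inverse of one; the
  factor with argument far to the left is first reflected (`gamma_upper`, `gamma_inv_upper`,
  `gamma_left_upper`). So `|φ(k;n)|` is bounded by a power of `n` times
  `(m + q₁n)! m! / ((rn-m)! ∏ (m + sᵢn)!)`.
* After `(rn-m)!` is weakened to `(rn-m-1)!`, the quotient of consecutive values of this expression
  is `x (x+q₁) (r-x) / ∏ (x+sᵢ)` at `x = (m+1)/n`, which is at most `1` exactly when `χ(x) ≥ 0`.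
  Hence the value at `m = 0` is the largest (`ratio_mono`).
* That value is, up to a factor `rn`, the multinomial coefficient of `q₁n` over
  `(rn, s₀n, s₁n, s₂n)`, and it is at most `Eⁿ` with `E = q₁^q₁ / (r^r ∏ sᵢ^sᵢ)`
  (`first_term_bound`).
* `E < |D(p)|` by monotonicity of an auxiliary function built from `x log x` (`entropy_ineq`), and
  the power of `n` is absorbed in a rate `d₂` strictly between `E` and `|D(p)|`.
-/

open Complex

/-! ### Growth of the Gamma function along an arithmetic progression -/

lemma gamma_upper (c : ℂ) (hc : ∀ k : ℤ, k ≤ 0 → c ≠ (k : ℂ)) :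
    ∃ C : ℝ, 0 < C ∧ ∃ M : ℕ, ∀ (N : ℕ) (W : ℝ), (N : ℝ) + 1 ≤ W →
      ‖Gamma ((N : ℂ) + c)‖ ≤ C * W ^ M * (N.factorial : ℝ) := by
  obtain ⟨M, hM⟩ := exists_nat_ge ‖c‖
  have key : ∀ N : ℕ, ‖Gamma ((N : ℂ) + c)‖
      ≤ (‖Gamma c‖ + 1) * ((N : ℝ) + 1) ^ M * (N.factorial : ℝ) := by
    intro N
    induction N with
    | zero => simp
    | succ N ih =>
      have hne : (N : ℂ) + c ≠ 0 := by
        intro h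
        apply hc (-(N : ℤ)) (by omega)
        push_cast
        linear_combination h
      have h1 : ((N + 1 : ℕ) : ℂ) + c = ((N : ℂ) + c) + 1 := by push_cast; ring
      rw [h1, Complex.Gamma_add_one _ hne, norm_mul, Nat.factorial_succ]
      have hn : ‖(N : ℂ) + c‖ ≤ N + M := by
        refine (norm_add_le _ _).trans ?_
        simpa using hM
      -- Bernoulli's inequality for `(1 + 1 / (N + 1)) ^ M`
      have hB : ((N : ℝ) + M) * ((N : ℝ) + 1) ^ M ≤ ((N : ℝ) + 1 + 1) ^ M * ((N : ℝ) + 1) := by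
        have hb := one_add_mul_le_pow (a := 1 / ((N : ℝ) + 1))
          (by have : (0 : ℝ) ≤ 1 / ((N : ℝ) + 1) := by positivity
              linarith) M
        have hpos : (0 : ℝ) < (N : ℝ) + 1 := by positivity
        have e1 : ((N : ℝ) + 1 + 1) = (1 + 1 / ((N : ℝ) + 1)) * ((N : ℝ) + 1) := by
          field_simp
        rw [e1, mul_pow]
        have e2 : (N : ℝ) + M ≤ (1 + M * (1 / ((N : ℝ) + 1))) * ((N : ℝ) + 1) := by
          have : (1 + M * (1 / ((N : ℝ) + 1))) * ((N : ℝ) + 1) = N + 1 + M := by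
            field_simp
          linarith
        calc ((N : ℝ) + M) * ((N : ℝ) + 1) ^ M
            ≤ ((1 + M * (1 / ((N : ℝ) + 1))) * ((N : ℝ) + 1)) * ((N : ℝ) + 1) ^ M := by gcongr
          _ ≤ ((1 + 1 / ((N : ℝ) + 1)) ^ M * ((N : ℝ) + 1)) * ((N : ℝ) + 1) ^ M := by gcongr
          _ = _ := by ring
      push_cast
      calc ‖(N : ℂ) + c‖ * ‖Gamma ((N : ℂ) + c)‖
          ≤ ((N : ℝ) + M) * ((‖Gamma c‖ + 1) * ((N : ℝ) + 1) ^ M * (N.factorial : ℝ)) := by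
            gcongr
        _ = (((N : ℝ) + M) * ((N : ℝ) + 1) ^ M) * ((‖Gamma c‖ + 1) * (N.factorial : ℝ)) := by ring
        _ ≤ (((N : ℝ) + 1 + 1) ^ M * ((N : ℝ) + 1)) * ((‖Gamma c‖ + 1) * (N.factorial : ℝ)) := by
            gcongr
        _ = _ := by ring
  refine ⟨‖Gamma c‖ + 1, by positivity, M, fun N W hW => (key N).trans ?_⟩
  gcongr

/-- At a pole of `Γ` the junk value `Γ = 0` gives `Γ⁻¹ = 0`, the true value of the entire function
`1 / Γ`, so no restriction on `c` is needed. -/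
lemma gamma_inv_upper (c : ℂ) :
    ∃ C : ℝ, 0 < C ∧ ∃ M : ℕ, ∀ (N : ℕ) (W : ℝ), (N : ℝ) + 1 ≤ W →
      ‖(Gamma ((N : ℂ) + c))⁻¹‖ ≤ C * W ^ M / (N.factorial : ℝ) := by
  obtain ⟨M, hM⟩ := exists_nat_ge (‖c‖ + 1)
  have hlarge : ∀ N : ℕ, ‖(Gamma (((N + M : ℕ) : ℂ) + c))⁻¹‖
      ≤ ‖(Gamma ((M : ℂ) + c))⁻¹‖ / (N.factorial : ℝ) := by
    intro N
    induction N with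
    | zero => simp
    | succ N ih =>
      have hlow : (N : ℝ) + 1 ≤ ‖((N + M : ℕ) : ℂ) + c‖ := by
        have h := norm_sub_norm_le (((N + M : ℕ) : ℂ)) (-c)
        rw [sub_neg_eq_add, norm_neg, Complex.norm_natCast] at h
        push_cast at h ⊢
        linarith
      have hne : ((N + M : ℕ) : ℂ) + c ≠ 0 := by
        intro h
        rw [h, norm_zero] at hlow
        have : (0 : ℝ) ≤ N := Nat.cast_nonneg N
        linarith
      have h1 : ((N + 1 + M : ℕ) : ℂ) + c = (((N + M : ℕ) : ℂ) + c) + 1 := by push_cast; ring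
      rw [h1, Complex.Gamma_add_one _ hne, mul_inv, norm_mul, norm_inv, Nat.factorial_succ]
      push_cast at *
      calc ‖(N : ℂ) + M + c‖⁻¹ * ‖(Gamma ((N : ℂ) + M + c))⁻¹‖
          ≤ ((N : ℝ) + 1)⁻¹ * (‖(Gamma ((M : ℂ) + c))⁻¹‖ / (N.factorial : ℝ)) := by gcongr
        _ = _ := by field_simp
  set C0 := ‖(Gamma ((M : ℂ) + c))⁻¹‖ with hC0
  set S := ∑ K ∈ Finset.range M, ‖(Gamma ((K : ℂ) + c))⁻¹‖ with hS
  have hS0 : 0 ≤ S := Finset.sum_nonneg fun _ _ => norm_nonneg _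
  have hC00 : 0 ≤ C0 := norm_nonneg _
  refine ⟨1 + C0 + S, by linarith, M, fun N W hW => ?_⟩
  have hW0 : (0 : ℝ) ≤ W := le_trans (by positivity) hW
  have hf : (0 : ℝ) < (N.factorial : ℝ) := by exact_mod_cast N.factorial_pos
  rcases lt_or_ge N M with h | h
  · have h1 : ‖(Gamma ((N : ℂ) + c))⁻¹‖ ≤ S :=
      Finset.single_le_sum (f := fun K : ℕ => ‖(Gamma ((K : ℂ) + c))⁻¹‖)
        (fun _ _ => norm_nonneg _) (Finset.mem_range.2 h)
    have h2 : (N.factorial : ℝ) ≤ W ^ M := by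
      have h3 : N.factorial ≤ (N + 1) ^ M :=
        N.factorial_le_pow.trans ((Nat.pow_le_pow_left N.le_succ N).trans
          (Nat.pow_le_pow_right N.succ_pos h.le))
      calc (N.factorial : ℝ) ≤ ((N : ℝ) + 1) ^ M := by exact_mod_cast h3
        _ ≤ W ^ M := by gcongr
    rw [le_div_iff₀ hf]
    have h4 : ‖(Gamma ((N : ℂ) + c))⁻¹‖ ≤ 1 + C0 + S := by linarith
    exact mul_le_mul h4 h2 hf.le (by linarith)
  · obtain ⟨K, rfl⟩ := Nat.exists_eq_add_of_le' h
    have h2 : ((K + M).factorial : ℝ) ≤ K.factorial * W ^ M := by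
      have h3 : (K + M).factorial ≤ K.factorial * (K + M) ^ M := by
        rw [← Nat.factorial_mul_ascFactorial]
        exact Nat.mul_le_mul_left _ (Nat.ascFactorial_le_pow_add K M)
      calc ((K + M).factorial : ℝ) ≤ K.factorial * ((K + M : ℕ) : ℝ) ^ M := by exact_mod_cast h3
        _ ≤ K.factorial * W ^ M := by
          gcongr
          linarith
    have hK : (0 : ℝ) < (K.factorial : ℝ) := by exact_mod_cast K.factorial_pos
    refine (hlarge K).trans ?_
    rw [div_le_div_iff₀ hK hf]
    calc C0 * ((K + M).factorial : ℝ) ≤ (1 + C0 + S) * (K.factorial * W ^ M) := by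
          exact mul_le_mul (by linarith) h2 hf.le (by linarith)
      _ = _ := by ring

/-- Euler's reflection formula turns `Γ` far to the left into a reciprocal Gamma value far to the
right; `|sin π(N + c)|` is independent of `N`. -/
lemma gamma_left_upper (c : ℂ) (hc : ∀ k : ℤ, c ≠ (k : ℂ)) :
    ∃ C : ℝ, 0 < C ∧ ∃ M : ℕ, ∀ (N : ℕ) (W : ℝ), (N : ℝ) + 1 ≤ W →
      ‖Gamma (1 - ((N : ℂ) + c))‖ ≤ C * W ^ M / (N.factorial : ℝ) := by
  obtain ⟨C, hC, M, h⟩ := gamma_inv_upper c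
  have hsin : Complex.sin (Real.pi * c) ≠ 0 := by
    rw [Complex.sin_ne_zero_iff]
    intro k hk
    apply hc k
    have hpi : (Real.pi : ℂ) ≠ 0 := by exact_mod_cast Real.pi_ne_zero
    have : (Real.pi : ℂ) * c = Real.pi * k := by rw [hk]; ring
    exact mul_left_cancel₀ hpi this
  have hsn : 0 < ‖Complex.sin (Real.pi * c)‖ := norm_pos_iff.2 hsin
  refine ⟨Real.pi / ‖Complex.sin (Real.pi * c)‖ * C, by have := Real.pi_pos; positivity, M,
    fun N W hW => ?_⟩
  have hG : Gamma ((N : ℂ) + c) ≠ 0 := by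
    apply Complex.Gamma_ne_zero
    intro m hm
    apply hc (-(m : ℤ) - N)
    push_cast
    linear_combination hm
  have hr := Complex.Gamma_mul_Gamma_one_sub ((N : ℂ) + c)
  have hs : Complex.sin (Real.pi * ((N : ℂ) + c)) = (-1) ^ N * Complex.sin (Real.pi * c) := by
    rw [← Complex.sin_antiperiodic.add_nat_mul_eq]
    congr 1
    ring
  rw [hs] at hr
  have e : Gamma (1 - ((N : ℂ) + c))
      = Real.pi / ((-1) ^ N * Complex.sin (Real.pi * c)) * (Gamma ((N : ℂ) + c))⁻¹ := by
    rw [← hr]; field_simp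
  rw [e, norm_mul, norm_div, norm_mul, norm_pow, norm_neg, norm_one, one_pow, one_mul,
    Complex.norm_real, Real.norm_of_nonneg Real.pi_pos.le]
  calc _ ≤ Real.pi / ‖Complex.sin (Real.pi * c)‖ * (C * W ^ M / (N.factorial : ℝ)) := by
        gcongr
        exact h N W hW
    _ = _ := by ring

/-! ### Quotients of factorials -/

/-- The summand with `(rn - m)!` weakened to `(rn - m - 1)!` is non-increasing in `m`: the
quotient of consecutive values is at most `1` by `χ ≥ 0` at `x = (m + 1) / n`. Here `j` stands for
`rn - m - 1`. -/
lemma ratio_mono (q r s0 s1 s2 n : ℕ) (hn : 0 < n)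
    (hchi : ∀ x : ℝ, 0 ≤ x → x ≤ r →
      x * (x + q) * (r - x) ≤ (x + s0) * (x + s1) * (x + s2)) :
    ∀ m j : ℕ, m + j + 1 = r * n →
      (m + q * n).factorial * m.factorial *
        ((r * n - 1).factorial * ((s0 * n).factorial * (s1 * n).factorial * (s2 * n).factorial))
      ≤ (q * n).factorial * (j.factorial *
        ((m + s0 * n).factorial * (m + s1 * n).factorial * (m + s2 * n).factorial)) := by
  intro m
  induction m with
  | zero =>
    intro j hj
    have : j = r * n - 1 := by omega
    subst this
    simp
  | succ m ih =>
    intro j hj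
    have h := ih (j + 1) (by omega)
    have hstep : (m + 1 + q * n) * (m + 1) * (j + 1)
        ≤ (m + 1 + s0 * n) * (m + 1 + s1 * n) * (m + 1 + s2 * n) := by
      have hn' : (0 : ℝ) < n := by exact_mod_cast hn
      have hr : ((m : ℝ) + 1) + (j + 1) = r * n := by
        have : (((m + 1 + j + 1 : ℕ)) : ℝ) = ((r * n : ℕ) : ℝ) := by rw [hj]
        push_cast at this
        linarith
      have hx := hchi (((m : ℝ) + 1) / n) (by positivity) (by
        rw [div_le_iff₀ hn']
        have : (0 : ℝ) ≤ j := Nat.cast_nonneg j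
        linarith)
      have hx3 := mul_le_mul_of_nonneg_right hx (by positivity : (0 : ℝ) ≤ (n : ℝ) ^ 3)
      have e1 : ((m : ℝ) + 1) / n * (((m : ℝ) + 1) / n + q) * (r - ((m : ℝ) + 1) / n) * (n : ℝ) ^ 3
          = ((m : ℝ) + 1 + q * n) * (m + 1) * (j + 1) := by
        have : (j : ℝ) + 1 = r * n - (m + 1) := by linarith
        rw [this]
        field_simp
      have e2 : (((m : ℝ) + 1) / n + s0) * (((m : ℝ) + 1) / n + s1) * (((m : ℝ) + 1) / n + s2)
          * (n : ℝ) ^ 3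
          = ((m : ℝ) + 1 + s0 * n) * (m + 1 + s1 * n) * (m + 1 + s2 * n) := by
        field_simp
      rw [e1, e2] at hx3
      exact_mod_cast hx3
    have f : ∀ a : ℕ, (m + 1 + a).factorial = (m + 1 + a) * (m + a).factorial := by
      intro a
      rw [show m + 1 + a = (m + a) + 1 by ring, Nat.factorial_succ]
    rw [f, f, f, f, Nat.factorial_succ m]
    rw [Nat.factorial_succ j] at h
    calc _ = ((m + 1 + q * n) * (m + 1)) * ((m + q * n).factorial * m.factorial *
        ((r * n - 1).factorial *
          ((s0 * n).factorial * (s1 * n).factorial * (s2 * n).factorial))) := by ring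
      _ ≤ ((m + 1 + q * n) * (m + 1)) * ((q * n).factorial * ((j + 1) * j.factorial *
        ((m + s0 * n).factorial * (m + s1 * n).factorial * (m + s2 * n).factorial))) :=
          Nat.mul_le_mul_left _ h
      _ = ((m + 1 + q * n) * (m + 1) * (j + 1)) * ((q * n).factorial * (j.factorial *
        ((m + s0 * n).factorial * (m + s1 * n).factorial * (m + s2 * n).factorial))) := by ring
      _ ≤ ((m + 1 + s0 * n) * (m + 1 + s1 * n) * (m + 1 + s2 * n)) *
        ((q * n).factorial * (j.factorial *
        ((m + s0 * n).factorial * (m + s1 * n).factorial * (m + s2 * n).factorial))) :=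
          Nat.mul_le_mul_right _ hstep
      _ = _ := by ring

lemma binom_bound (a b : ℕ) :
    (a + b).factorial * (a ^ a * b ^ b) ≤ a.factorial * b.factorial * (a + b) ^ (a + b) := by
  have h : a ^ a * b ^ b * (a + b).choose a ≤ (a + b) ^ (a + b) := by
    rw [add_pow a b (a + b)]
    have := Finset.single_le_sum
      (f := fun m => a ^ m * b ^ (a + b - m) * (a + b).choose m)
      (fun _ _ => Nat.zero_le _) (Finset.mem_range.2 (by omega : a < a + b + 1))
    simpa using this
  calc (a + b).factorial * (a ^ a * b ^ b)
      = a.factorial * b.factorial * (a ^ a * b ^ b * (a + b).choose a) := by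
        rw [← Nat.add_choose_mul_factorial_mul_factorial a b, ← Nat.choose_symm_add]
        ring
    _ ≤ _ := Nat.mul_le_mul_left _ h

lemma multinom_bound (a b c d : ℕ) :
    (a + b + c + d).factorial * (a ^ a * b ^ b * c ^ c * d ^ d)
      ≤ a.factorial * b.factorial * c.factorial * d.factorial
        * (a + b + c + d) ^ (a + b + c + d) := by
  have h1 := binom_bound a b
  have h2 := binom_bound (a + b) c
  have h3 := binom_bound (a + b + c) d
  have p1 : 0 < (a + b) ^ (a + b) := Nat.pow_self_pos
  have p2 : 0 < (a + b + c) ^ (a + b + c) := Nat.pow_self_pos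
  refine Nat.le_of_mul_le_mul_left ?_ (Nat.mul_pos p1 p2)
  calc _ = (a ^ a * b ^ b) * (a + b) ^ (a + b) * c ^ c *
        ((a + b + c + d).factorial * ((a + b + c) ^ (a + b + c) * d ^ d)) := by ring
    _ ≤ (a ^ a * b ^ b) * (a + b) ^ (a + b) * c ^ c *
        ((a + b + c).factorial * d.factorial * (a + b + c + d) ^ (a + b + c + d)) :=
        Nat.mul_le_mul_left _ h3
    _ = (a ^ a * b ^ b) * (d.factorial * (a + b + c + d) ^ (a + b + c + d)) *
        ((a + b + c).factorial * ((a + b) ^ (a + b) * c ^ c)) := by ring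
    _ ≤ (a ^ a * b ^ b) * (d.factorial * (a + b + c + d) ^ (a + b + c + d)) *
        ((a + b).factorial * c.factorial * (a + b + c) ^ (a + b + c)) :=
        Nat.mul_le_mul_left _ h2
    _ = (d.factorial * (a + b + c + d) ^ (a + b + c + d) * c.factorial *
        (a + b + c) ^ (a + b + c)) * ((a + b).factorial * (a ^ a * b ^ b)) := by ring
    _ ≤ (d.factorial * (a + b + c + d) ^ (a + b + c + d) * c.factorial *
        (a + b + c) ^ (a + b + c)) * (a.factorial * b.factorial * (a + b) ^ (a + b)) :=
        Nat.mul_le_mul_left _ h1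
    _ = _ := by ring

/-- The exponential growth rate of the first summand `k = (q₁ - p₀)n`, with `r = q₂ - q₁`,
`sᵢ = q₁ - pᵢ`. -/
noncomputable def Erate (q r s0 s1 s2 : ℕ) : ℝ :=
  (q : ℝ) ^ q / ((r : ℝ) ^ r * (s0 : ℝ) ^ s0 * (s1 : ℝ) ^ s1 * (s2 : ℝ) ^ s2)

lemma first_term_bound (q r s0 s1 s2 n : ℕ) (hn : 0 < n) (hq : r + s0 + s1 + s2 = q) :
    ((q * n).factorial : ℝ) ≤ Erate q r s0 s1 s2 ^ n *
      ((r * n).factorial * ((s0 * n).factorial * (s1 * n).factorial * (s2 * n).factorial)) := by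
  have h := multinom_bound (r * n) (s0 * n) (s1 * n) (s2 * n)
  have e : r * n + s0 * n + s1 * n + s2 * n = q * n := by rw [← hq]; ring
  rw [e] at h
  have hpow : ∀ a : ℕ, (((a * n : ℕ) : ℝ)) ^ (a * n) = ((a : ℝ) ^ a) ^ n * (n : ℝ) ^ (a * n) := by
    intro a
    push_cast
    rw [mul_pow, pow_mul]
  have h' : ((q * n).factorial : ℝ) * (((r * n : ℕ) : ℝ) ^ (r * n) * ((s0 * n : ℕ) : ℝ) ^ (s0 * n)
      * ((s1 * n : ℕ) : ℝ) ^ (s1 * n) * ((s2 * n : ℕ) : ℝ) ^ (s2 * n))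
      ≤ (r * n).factorial * (s0 * n).factorial * (s1 * n).factorial * (s2 * n).factorial
        * ((q * n : ℕ) : ℝ) ^ (q * n) := by exact_mod_cast h
  rw [hpow, hpow, hpow, hpow, hpow] at h'
  have hnn : (0 : ℝ) < (n : ℝ) ^ (q * n) := by
    have : (0 : ℝ) < n := by exact_mod_cast hn
    positivity
  have en : (n : ℝ) ^ (q * n)
      = (n : ℝ) ^ (r * n) * (n : ℝ) ^ (s0 * n) * (n : ℝ) ^ (s1 * n) * (n : ℝ) ^ (s2 * n) := by
    rw [← pow_add, ← pow_add, ← pow_add, e]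
  have hpp : ∀ a : ℕ, (0 : ℝ) < (a : ℝ) ^ a := by
    intro a
    exact_mod_cast (Nat.pow_self_pos : 0 < a ^ a)
  have hr := hpp r
  have hs0 := hpp s0
  have hs1 := hpp s1
  have hs2 := hpp s2
  have hD : (0 : ℝ) < ((r : ℝ) ^ r * (s0 : ℝ) ^ s0 * (s1 : ℝ) ^ s1 * (s2 : ℝ) ^ s2) ^ n := by
    positivity
  rw [Erate, div_pow, div_mul_eq_mul_div, le_div_iff₀ hD]
  refine le_of_mul_le_mul_right ?_ hnn
  calc _ = ((q * n).factorial : ℝ) * (((r : ℝ) ^ r) ^ n * (n : ℝ) ^ (r * n)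
        * (((s0 : ℝ) ^ s0) ^ n * (n : ℝ) ^ (s0 * n)) * (((s1 : ℝ) ^ s1) ^ n * (n : ℝ) ^ (s1 * n))
        * (((s2 : ℝ) ^ s2) ^ n * (n : ℝ) ^ (s2 * n))) := by
        rw [en]
        simp only [mul_pow]
        ring
    _ ≤ _ := h'
    _ = _ := by ring

lemma ratio_bound (q r s0 s1 s2 n : ℕ) (hn : 0 < n) (hq : r + s0 + s1 + s2 = q)
    (hchi : ∀ x : ℝ, 0 ≤ x → x ≤ r →
      x * (x + q) * (r - x) ≤ (x + s0) * (x + s1) * (x + s2))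
    (m : ℕ) (hm : m < r * n) :
    ((m + q * n).factorial : ℝ) * m.factorial / ((r * n - m).factorial *
        ((m + s0 * n).factorial * (m + s1 * n).factorial * (m + s2 * n).factorial))
      ≤ (r * n : ℕ) * Erate q r s0 s1 s2 ^ n := by
  obtain ⟨j, hj⟩ : ∃ j, m + j + 1 = r * n := ⟨r * n - m - 1, by omega⟩
  have h1 := ratio_mono q r s0 s1 s2 n hn hchi m j hj
  have h1' : ((m + q * n).factorial : ℝ) * m.factorial *
        ((r * n - 1).factorial * ((s0 * n).factorial * (s1 * n).factorial * (s2 * n).factorial))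
      ≤ (q * n).factorial * (j.factorial *
        ((m + s0 * n).factorial * (m + s1 * n).factorial * (m + s2 * n).factorial)) := by
    exact_mod_cast h1
  have h2 := first_term_bound q r s0 s1 s2 n hn hq
  have hfac : ((r * n).factorial : ℝ) = (r * n : ℕ) * (r * n - 1).factorial := by
    rw [← Nat.mul_factorial_pred (by omega : r * n ≠ 0)]
    push_cast
    ring
  rw [hfac] at h2
  have hjle : (j.factorial : ℝ) ≤ (r * n - m).factorial := by
    exact_mod_cast Nat.factorial_le (by omega : j ≤ r * n - m)
  have fp : ∀ a : ℕ, (0 : ℝ) < (a.factorial : ℝ) := fun a => by exact_mod_cast a.factorial_pos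
  have p0 := fp (m + s0 * n)
  have p1 := fp (m + s1 * n)
  have p2 := fp (m + s2 * n)
  have p3 := fp (s0 * n)
  have p4 := fp (s1 * n)
  have p5 := fp (s2 * n)
  have p6 := fp (r * n - 1)
  have p7 := fp (r * n - m)
  have hE : 0 ≤ Erate q r s0 s1 s2 := by unfold Erate; positivity
  rw [div_le_iff₀ (by positivity)]
  have hK : (0 : ℝ) < (r * n - 1).factorial *
      ((s0 * n).factorial * (s1 * n).factorial * (s2 * n).factorial) := by positivity
  refine le_of_mul_le_mul_right ?_ hK
  refine h1'.trans ?_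
  calc _ ≤ (Erate q r s0 s1 s2 ^ n * ((r * n : ℕ) * (r * n - 1).factorial *
        ((s0 * n).factorial * (s1 * n).factorial * (s2 * n).factorial))) *
        ((r * n - m).factorial *
        ((m + s0 * n).factorial * (m + s1 * n).factorial * (m + s2 * n).factorial)) := by
        gcongr
    _ = _ := by ring

/-! ### The growth rate is smaller than `|D(p)|` -/

/-- `G(t) = φ(q₂-p₀-t) - φ(p₀+t) - φ(p₁-t) + φ(q₂-p₁+t)` with `φ(x) = x log x` is strictly
increasing on `[0, p₁+p₂-q₂]`, as `G'(t)` is the logarithm of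
`(p₁-t)(q₂-p₁+t) / ((q₂-p₀-t)(p₀+t))`, whose numerator exceeds its denominator by
`(p₀-p₁+2t)(p₀+p₁-q₂)`. The claim is `G(0) < G(p₁+p₂-q₂)`. -/
lemma entropy_ineq (p0 p1 p2 q1 q2 : ℝ) (hbal : q1 + q2 = p0 + p1 + p2)
    (h1 : p1 ≤ p0) (h2 : p2 ≤ p0) (hq : q1 < q2) (h5 : q2 < p1 + p2) :
    (q2 - p0) * Real.log (q2 - p0) - p0 * Real.log p0 - p1 * Real.log p1
        + (q2 - p1) * Real.log (q2 - p1)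
      < (q2 - q1) * Real.log (q2 - q1) - q1 * Real.log q1 - (q2 - p2) * Real.log (q2 - p2)
        + p2 * Real.log p2 := by
  set T := p1 + p2 - q2 with hT
  have hT0 : 0 < T := sub_pos.2 h5
  let φ : ℝ → ℝ := fun x => x * Real.log x
  have hφ : Continuous φ := Real.continuous_mul_log
  have hφ' : ∀ x : ℝ, 0 < x → HasDerivAt φ (Real.log x + 1) x :=
    fun x hx => Real.hasDerivAt_mul_log hx.ne'
  let G : ℝ → ℝ := fun t => φ (q2 - p0 - t) - φ (p0 + t) - φ (p1 - t) + φ (q2 - p1 + t)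
  have hmono : StrictMonoOn G (Set.Icc 0 T) := by
    refine strictMonoOn_of_deriv_pos (convex_Icc 0 T) (by fun_prop) ?_
    intro t ht
    rw [interior_Icc] at ht
    obtain ⟨ht0, htT⟩ := ht
    have a1 : 0 < q2 - p0 - t := by linarith
    have a2 : 0 < p0 + t := by linarith
    have a3 : 0 < p1 - t := by linarith
    have a4 : 0 < q2 - p1 + t := by linarith
    have d1 := (hφ' _ a1).comp t ((hasDerivAt_id t).const_sub (q2 - p0))
    have d2 := (hφ' _ a2).comp t ((hasDerivAt_id t).const_add p0)
    have d3 := (hφ' _ a3).comp t ((hasDerivAt_id t).const_sub p1)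
    have d4 := (hφ' _ a4).comp t ((hasDerivAt_id t).const_add (q2 - p1))
    have d : HasDerivAt G _ t := ((d1.sub d2).sub d3).add d4
    rw [d.deriv]
    have hlog : Real.log ((q2 - p0 - t) * (p0 + t)) < Real.log ((p1 - t) * (q2 - p1 + t)) := by
      apply Real.log_lt_log (by positivity)
      have : 0 < (p0 - p1 + 2 * t) * (p0 + p1 - q2) := by
        apply mul_pos <;> linarith
      nlinarith
    rw [Real.log_mul a1.ne' a2.ne', Real.log_mul a3.ne' a4.ne'] at hlog
    linarith
  have hlt := hmono (Set.left_mem_Icc.2 hT0.le) (Set.right_mem_Icc.2 hT0.le) hT0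
  simp only [G, φ] at hlt
  have e1 : q2 - p0 - T = q2 - q1 := by rw [hT]; linarith
  have e2 : p0 + T = q1 := by rw [hT]; linarith
  have e3 : p1 - T = q2 - p2 := by rw [hT]; linarith
  have e4 : q2 - p1 + T = p2 := by rw [hT]; linarith
  rw [e1, e2, e3, e4] at hlt
  simpa using hlt

lemma pow_self_eq_exp (a : ℕ) (ha : 0 < a) : (a : ℝ) ^ a = Real.exp (a * Real.log a) := by
  have : (0 : ℝ) < a := by exact_mod_cast ha
  rw [← Real.rpow_natCast, Real.rpow_def_of_pos this, mul_comm]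

lemma rpow_self_eq_exp (x : ℝ) (hx : 0 < x) : x ^ x = Real.exp (x * Real.log x) := by
  rw [Real.rpow_def_of_pos hx, mul_comm]

lemma Erate_lt_Dval (p0 p1 p2 q1 q2 : ℤ) (q r s0 s1 s2 : ℕ)
    (hbal : q1 + q2 = p0 + p1 + p2)
    (h1 : p1 ≤ p0) (h2 : p2 ≤ p0) (h3 : p0 < q1) (h5 : q2 < p1 + p2) (hq : q1 < q2)
    (eq : (q : ℤ) = q1) (er : (r : ℤ) = q2 - q1) (e0 : (s0 : ℤ) = q1 - p0)
    (e1 : (s1 : ℤ) = q1 - p1) (e2 : (s2 : ℤ) = q1 - p2) :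
    Erate q r s0 s1 s2 < |Dval p0 p1 p2 q1 q2| := by
  have pos : ∀ z : ℤ, 0 < z → (0 : ℝ) < (z : ℝ) := fun z hz => by exact_mod_cast hz
  have fq : (q : ℝ) = (q1 : ℝ) := by exact_mod_cast eq
  have fr : (r : ℝ) = ((q2 - q1 : ℤ) : ℝ) := by exact_mod_cast er
  have f0 : (s0 : ℝ) = ((q1 - p0 : ℤ) : ℝ) := by exact_mod_cast e0
  have f1 : (s1 : ℝ) = ((q1 - p1 : ℤ) : ℝ) := by exact_mod_cast e1
  have f2 : (s2 : ℝ) = ((q1 - p2 : ℤ) : ℝ) := by exact_mod_cast e2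
  have hE : Erate q r s0 s1 s2 = Real.exp ((q1 : ℝ) * Real.log q1 -
      (((q2 - q1 : ℤ) : ℝ) * Real.log ((q2 - q1 : ℤ) : ℝ)
        + ((q1 - p0 : ℤ) : ℝ) * Real.log ((q1 - p0 : ℤ) : ℝ)
        + ((q1 - p1 : ℤ) : ℝ) * Real.log ((q1 - p1 : ℤ) : ℝ)
        + ((q1 - p2 : ℤ) : ℝ) * Real.log ((q1 - p2 : ℤ) : ℝ))) := by
    rw [Erate, pow_self_eq_exp q (by omega), pow_self_eq_exp r (by omega),
      pow_self_eq_exp s0 (by omega), pow_self_eq_exp s1 (by omega), pow_self_eq_exp s2 (by omega),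
      ← Real.exp_add, ← Real.exp_add, ← Real.exp_add, ← Real.exp_sub, fq, fr, f0, f1, f2]
  have hD : |Dval p0 p1 p2 q1 q2| = Real.exp (
      ((p0 : ℝ) * Real.log p0 + (p1 : ℝ) * Real.log p1 + (p2 : ℝ) * Real.log p2) -
      (((q1 - p0 : ℤ) : ℝ) * Real.log ((q1 - p0 : ℤ) : ℝ)
        + ((q1 - p1 : ℤ) : ℝ) * Real.log ((q1 - p1 : ℤ) : ℝ)
        + ((q1 - p2 : ℤ) : ℝ) * Real.log ((q1 - p2 : ℤ) : ℝ)
        + ((q2 - p0 : ℤ) : ℝ) * Real.log ((q2 - p0 : ℤ) : ℝ)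
        + ((q2 - p1 : ℤ) : ℝ) * Real.log ((q2 - p1 : ℤ) : ℝ)
        + ((q2 - p2 : ℤ) : ℝ) * Real.log ((q2 - p2 : ℤ) : ℝ))) := by
    rw [Dval, mul_div_assoc, abs_mul, abs_zpow, abs_neg, abs_one, one_zpow, one_mul,
      rpow_self_eq_exp _ (pos p0 (by omega)), rpow_self_eq_exp _ (pos p1 (by omega)),
      rpow_self_eq_exp _ (pos p2 (by omega)), rpow_self_eq_exp _ (pos (q1 - p0) (by omega)),
      rpow_self_eq_exp _ (pos (q1 - p1) (by omega)), rpow_self_eq_exp _ (pos (q1 - p2) (by omega)),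
      rpow_self_eq_exp _ (pos (q2 - p0) (by omega)), rpow_self_eq_exp _ (pos (q2 - p1) (by omega)),
      rpow_self_eq_exp _ (pos (q2 - p2) (by omega))]
    simp only [← Real.exp_add, ← Real.exp_sub, Real.abs_exp]
  rw [hE, hD, Real.exp_lt_exp]
  have h := entropy_ineq p0 p1 p2 q1 q2 (by exact_mod_cast hbal) (by exact_mod_cast h1)
    (by exact_mod_cast h2) (by exact_mod_cast hq) (by exact_mod_cast h5)
  push_cast
  linarith

/-! ### Assembling the bound -/

/-- A polynomial factor is absorbed by any strictly larger exponential rate. -/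
lemma absorb_poly (E D : ℝ) (hE : 0 ≤ E) (hED : E < D) (A : ℕ) :
    ∃ d : ℝ, 0 < d ∧ d < D ∧ ∃ B : ℝ, 0 < B ∧ ∀ n : ℕ, 0 < n → (n : ℝ) ^ A * E ^ n ≤ B * d ^ n := by
  refine ⟨(E + D) / 2, by linarith, by linarith, ?_⟩
  set d := (E + D) / 2 with hd
  have hd0 : 0 < d := by linarith
  have ht := tendsto_pow_const_mul_const_pow_of_lt_one A (r := E / d) (by positivity)
    (by rw [div_lt_one hd0]; linarith)
  obtain ⟨B, hB⟩ := ht.bddAbove_range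
  refine ⟨|B| + 1, by positivity, fun n _ => ?_⟩
  have h : (n : ℝ) ^ A * (E / d) ^ n ≤ B := hB (Set.mem_range_self n)
  rw [div_pow, ← mul_div_assoc, div_le_iff₀ (by positivity)] at h
  refine h.trans ?_
  gcongr
  linarith [le_abs_self B]

/-- For `p ∈ S(ℤ)` with `q₁ < q₂`, assuming
`χ(x;p) ≥ 0` on `[0, q₂−q₁]`, and `a ∈ ℂ⁵` with `Re s(a) > 0`, `a₀ ∉ ℤ≤0`,
`b₁−a₀ ∉ ℤ`, `b₂−a₀ ∉ ℤ`, the second component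
`g₂(n) = Σ_{k=(q₁−p₀)n}^{(q₂−p₀)n−1} φ(k;n)` satisfies
`|t(a)·g₂(n)| ≤ C₂·d₂ⁿ` for some `0 < d₂ < |D(p)|`, `C₂ > 0` and all `n ≥ N₂`. -/
theorem second_component_bound (p0 p1 p2 q1 q2 : ℤ)
    (hbal : q1 + q2 = p0 + p1 + p2)
    (h1 : p1 ≤ p0) (h2 : p2 ≤ p0) (h3 : p0 < q1) (h4 : q1 ≤ q2) (h5 : q2 < p1 + p2)
    (hq : q1 < q2)
    (hchi : ∀ x : ℝ, 0 ≤ x → x ≤ (q2 : ℝ) - (q1 : ℝ) →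
      0 ≤ (x + q1 - p0) * (x + q1 - p1) * (x + q1 - p2) + x * (x + q1) * (x + q1 - q2))
    (a0 a1 a2 b1 b2 : ℂ)
    (hs : 0 < (b1 + b2 - a0 - a1 - a2).re)
    (ha0 : ∀ k : ℤ, k ≤ 0 → a0 ≠ (k : ℂ))
    (hb1 : ∀ k : ℤ, b1 - a0 ≠ (k : ℂ)) (hb2 : ∀ k : ℤ, b2 - a0 ≠ (k : ℂ)) :
    ∃ d2 : ℝ, 0 < d2 ∧ d2 < |Dval p0 p1 p2 q1 q2| ∧
      ∃ C2 : ℝ, 0 < C2 ∧ ∃ N2 : ℕ, ∀ n : ℕ, N2 ≤ n →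
        ‖tval a0 b1 b2 *
            ∑ k ∈ Finset.Ico ((q1 - p0).toNat * n) ((q2 - p0).toNat * n),
              phiSummand a0 a1 a2 b1 b2 p0 p1 p2 q1 q2 k n‖ ≤ C2 * d2 ^ n := by
  obtain ⟨q, eq⟩ := Int.eq_ofNat_of_zero_le (by omega : 0 ≤ q1)
  obtain ⟨r, er⟩ := Int.eq_ofNat_of_zero_le (by omega : 0 ≤ q2 - q1)
  obtain ⟨s0, e0⟩ := Int.eq_ofNat_of_zero_le (by omega : 0 ≤ q1 - p0)
  obtain ⟨s1, e1⟩ := Int.eq_ofNat_of_zero_le (by omega : 0 ≤ q1 - p1)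
  obtain ⟨s2, e2⟩ := Int.eq_ofNat_of_zero_le (by omega : 0 ≤ q1 - p2)
  have hsum : r + s0 + s1 + s2 = q := by omega
  have hED := Erate_lt_Dval p0 p1 p2 q1 q2 q r s0 s1 s2 hbal h1 h2 h3 h5 hq eq.symm er.symm
    e0.symm e1.symm e2.symm
  have fq : (q1 : ℝ) = q := by exact_mod_cast eq
  have fr : (q2 : ℝ) - q1 = r := by exact_mod_cast er
  have f0 : (q1 : ℝ) - p0 = s0 := by exact_mod_cast e0
  have f1 : (q1 : ℝ) - p1 = s1 := by exact_mod_cast e1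
  have f2 : (q1 : ℝ) - p2 = s2 := by exact_mod_cast e2
  have hchi' : ∀ x : ℝ, 0 ≤ x → x ≤ r →
      x * (x + q) * (r - x) ≤ (x + s0) * (x + s1) * (x + s2) := by
    intro x hx0 hx1
    have h := hchi x hx0 (by rw [fr]; exact hx1)
    rw [← fq, ← fr, ← f0, ← f1, ← f2]
    linarith
  obtain ⟨C₀, hC₀, M₀, B₀⟩ := gamma_upper a0 ha0
  obtain ⟨C₁, hC₁, M₁, B₁⟩ := gamma_upper (a0 - b1 + 1) (by
    intro k _ hk
    apply hb1 (1 - k)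
    push_cast
    linear_combination -hk)
  obtain ⟨C₂, hC₂, M₂, B₂⟩ := gamma_left_upper (b2 - a0) hb2
  obtain ⟨C₃, hC₃, M₃, B₃⟩ := gamma_inv_upper 1
  obtain ⟨C₄, hC₄, M₄, B₄⟩ := gamma_inv_upper (a0 - a1 + 1)
  obtain ⟨C₅, hC₅, M₅, B₅⟩ := gamma_inv_upper (a0 - a2 + 1)
  set E := Erate q r s0 s1 s2 with hEdef
  have hE : 0 ≤ E := by rw [hEdef]; unfold Erate; positivity
  set M := M₀ + M₁ + M₂ + M₃ + M₄ + M₅ with hM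
  set C := C₀ * C₁ * C₂ * C₃ * C₄ * C₅ with hC
  have hCpos : 0 < C := by positivity
  set K : ℝ := q + r + 1 with hK
  have hterm : ∀ n : ℕ, 0 < n → ∀ m : ℕ, m < r * n →
      ‖phiSummand a0 a1 a2 b1 b2 p0 p1 p2 q1 q2 (s0 * n + m) n‖
        ≤ C * (K * n) ^ (M + 1) * E ^ n := by
    intro n hn m hm
    have hn1 : (1 : ℝ) ≤ n := by exact_mod_cast hn
    set W : ℝ := K * n with hW
    have hmr : (m : ℝ) ≤ r * n := by exact_mod_cast hm.le
    have hW0 : (0 : ℝ) ≤ W := by positivity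
    have big : ∀ N : ℕ, N ≤ (q + r) * n → (N : ℝ) + 1 ≤ W := by
      intro N hN
      have : (N : ℝ) ≤ (q + r) * n := by exact_mod_cast hN
      rw [hW, hK]
      linarith
    have hs0q : s0 * n ≤ q * n := Nat.mul_le_mul_right n (by omega)
    have hs1q : s1 * n ≤ q * n := Nat.mul_le_mul_right n (by omega)
    have hs2q : s2 * n ≤ q * n := Nat.mul_le_mul_right n (by omega)
    have hqr : (q + r) * n = q * n + r * n := by ring
    have b0 := B₀ (m + q * n) W (big _ (by omega))
    have b1' := B₁ m W (big _ (by omega))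
    have b2' := B₂ (r * n - m) W (big _ (by omega))
    have b3 := B₃ (m + s0 * n) W (big _ (by omega))
    have b4 := B₄ (m + s1 * n) W (big _ (by omega))
    have b5 := B₅ (m + s2 * n) W (big _ (by omega))
    have gq : (q1 : ℂ) = q := by exact_mod_cast eq
    have gr : (q2 : ℂ) - q1 = r := by exact_mod_cast er
    have g0 : (q1 : ℂ) - p0 = s0 := by exact_mod_cast e0
    have g1 : (q1 : ℂ) - p1 = s1 := by exact_mod_cast e1
    have g2 : (q1 : ℂ) - p2 = s2 := by exact_mod_cast e2
    have hphi : phiSummand a0 a1 a2 b1 b2 p0 p1 p2 q1 q2 (s0 * n + m) n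
        = Gamma (((m + q * n : ℕ) : ℂ) + a0) * Gamma ((m : ℂ) + (a0 - b1 + 1)) *
          Gamma (1 - (((r * n - m : ℕ) : ℂ) + (b2 - a0))) *
          (Gamma (((m + s0 * n : ℕ) : ℂ) + 1))⁻¹ *
          (Gamma (((m + s1 * n : ℕ) : ℂ) + (a0 - a1 + 1)))⁻¹ *
          (Gamma (((m + s2 * n : ℕ) : ℂ) + (a0 - a2 + 1)))⁻¹ := by
      have c0 : ((s0 * n + m : ℕ) : ℂ) + (p0 : ℂ) * n + a0 = ((m + q * n : ℕ) : ℂ) + a0 := by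
        push_cast
        rw [← gq, ← g0]
        ring
      have c1 : ((s0 * n + m : ℕ) : ℂ) - ((q1 - p0 : ℤ) : ℂ) * n + a0 - b1 + 1
          = (m : ℂ) + (a0 - b1 + 1) := by
        push_cast
        rw [← g0]
        ring
      have c2 : ((s0 * n + m : ℕ) : ℂ) - ((q2 - p0 : ℤ) : ℂ) * n + a0 - b2 + 1
          = 1 - (((r * n - m : ℕ) : ℂ) + (b2 - a0)) := by
        rw [Nat.cast_sub hm.le]
        push_cast
        rw [← g0, ← gr]
        ring
      have c3 : ((s0 * n + m : ℕ) : ℂ) + 1 = ((m + s0 * n : ℕ) : ℂ) + 1 := by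
        push_cast
        ring
      have c4 : ((s0 * n + m : ℕ) : ℂ) + ((p0 - p1 : ℤ) : ℂ) * n + a0 - a1 + 1
          = ((m + s1 * n : ℕ) : ℂ) + (a0 - a1 + 1) := by
        push_cast
        rw [← g0, ← g1]
        ring
      have c5 : ((s0 * n + m : ℕ) : ℂ) + ((p0 - p2 : ℤ) : ℂ) * n + a0 - a2 + 1
          = ((m + s2 * n : ℕ) : ℂ) + (a0 - a2 + 1) := by
        push_cast
        rw [← g0, ← g2]
        ring
      rw [phiSummand, c0, c1, c2, c3, c4, c5, div_eq_mul_inv, mul_inv, mul_inv]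
      simp only [← mul_assoc]
    rw [hphi]
    simp only [norm_mul]
    have hR := ratio_bound q r s0 s1 s2 n hn hsum hchi' m hm
    have hrW : ((r * n : ℕ) : ℝ) ≤ W := by
      have := big (r * n) (by omega)
      linarith
    calc _ ≤ (C₀ * W ^ M₀ * ((m + q * n).factorial : ℝ)) * (C₁ * W ^ M₁ * (m.factorial : ℝ)) *
          (C₂ * W ^ M₂ / ((r * n - m).factorial : ℝ)) *
          (C₃ * W ^ M₃ / ((m + s0 * n).factorial : ℝ)) *
          (C₄ * W ^ M₄ / ((m + s1 * n).factorial : ℝ)) *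
          (C₅ * W ^ M₅ / ((m + s2 * n).factorial : ℝ)) := by gcongr
      _ = C * W ^ M * (((m + q * n).factorial : ℝ) * m.factorial / ((r * n - m).factorial *
          ((m + s0 * n).factorial * (m + s1 * n).factorial * (m + s2 * n).factorial))) := by
          clear_value W
          rw [hC, hM]
          simp only [pow_add]
          ring
      _ ≤ C * W ^ M * ((r * n : ℕ) * E ^ n) := by gcongr
      _ ≤ C * W ^ M * (W * E ^ n) := by gcongr
      _ = _ := by ring
  obtain ⟨d, hd0, hdD, B, hB0, hB⟩ := absorb_poly E _ hE hED (M + 2)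
  refine ⟨d, hd0, hdD, (‖tval a0 b1 b2‖ + 1) * (r * (C * K ^ (M + 1)) + 1) * B, by positivity, 1,
    fun n hn => ?_⟩
  have t0 : (q1 - p0).toNat = s0 := by omega
  have t1 : (q2 - p0).toNat = s0 + r := by omega
  rw [t0, t1, Finset.sum_Ico_eq_sum_range]
  have t2 : (s0 + r) * n - s0 * n = r * n := by rw [add_mul]; omega
  rw [t2, norm_mul]
  have hsumle : ‖∑ m ∈ Finset.range (r * n),
      phiSummand a0 a1 a2 b1 b2 p0 p1 p2 q1 q2 (s0 * n + m) n‖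
      ≤ (r * (C * K ^ (M + 1)) + 1) * ((n : ℝ) ^ (M + 2) * E ^ n) := by
    refine (norm_sum_le _ _).trans ?_
    refine (Finset.sum_le_card_nsmul _ _ _ fun m hm =>
      hterm n hn m (Finset.mem_range.1 hm)).trans ?_
    rw [Finset.card_range, nsmul_eq_mul]
    push_cast
    calc (r : ℝ) * n * (C * (K * n) ^ (M + 1) * E ^ n)
        = (r * (C * K ^ (M + 1))) * ((n : ℝ) ^ (M + 2) * E ^ n) := by
          rw [mul_pow]
          ring
      _ ≤ _ := by
        gcongr
        linarith
  calc _ ≤ (‖tval a0 b1 b2‖ + 1) * ((r * (C * K ^ (M + 1)) + 1) * (B * d ^ n)) := by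
        gcongr
        · linarith
        · exact hsumle.trans (mul_le_mul_of_nonneg_left (hB n hn) (by positivity))
    _ = _ := by ring
end
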